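/- arXiv:2304.03710 — 2 statements merged into one kernel-verified Lean document; each statement's English description precedes it below -/
import Mathlib

section
/- Let {G_t}_{t=0}^{C(n,2)} be a random graph process on {1,…,n}. For every fixed i ∈ ℕ⁺, with high probability, for every t with t_i^* ≤ t < t_{i+1}^*, μ(G_t) = n_0(G_t) + ⌈(n_1(G_t) + i)/2⌉. -/
/-!
Copies of `K_{1,3}` appear when the process has about `n ^ (2/3)` edges, and the proof looks at a
single later time `T = s ^ 7`, where `s = ⌊n ^ (1/10)⌋`, so that `T` is about `n ^ (7/10)`.

*Probabilistic part.* At time `T` the expected number of sets of five vertices spanning four edges is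
`O(n ^ 5 (T / n ^ 2) ^ 4) = O(s ^ (-2))`, and the expected number of triangles tends to `0` as well
(`sum_hasDense_le`). On the other hand `G_T` spans at least `i + 1` copies of `K_{1,3}` with high
probability, by Chebyshev's inequality (`second_moment`). To have disjoint sets of potential edges at
the different centres, only stars with centre in the lower half and leaves in the upper half of the
vertex set are counted; their expected number is of order `s`.

*Reduction.* If `G_T` has these properties then `t_{i+1}^* ≤ T`, and being sparse is inherited by
all earlier graphs (`process_property`). A graph without triangles and without four edges on five
vertices is a forest of maximum degree at most `3` whose vertices of degree `3` are pairwise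
non-adjacent; it spans exactly `n₃` copies of `K_{1,3}`, so `n₃ = i` for `t_i^* ≤ t < t_{i+1}^*`.

*Deterministic part.* For such a forest `mu = n - e + n₃` (`mu_eq`), which equals
`n₀ + (n₁ + n₃) / 2` by the handshake lemma. Deleting an edge at each vertex of degree `3` leaves a
linear forest, whose `n - e + n₃` paths can be closed up to a Hamiltonian cycle by as many new
edges (`exists_isPathCover`, `exists_completion`). Conversely, a Hamiltonian cycle avoids at least
one edge at every vertex of degree `3`, and these edges are distinct, so at least `n - e + n₃`
edges of the cycle are new (`le_card_of_isHamiltonian`).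
-/

open Filter
open scoped Classical

namespace PaperMu

/-- The probability that the binomial random graph `G(n,p)` satisfies the property `P`. -/
noncomputable def gnpProb (n : ℕ) (p : ℝ) (P : SimpleGraph (Fin n) → Prop) : ℝ :=
  ∑ G : SimpleGraph (Fin n),
    (if P G then p ^ G.edgeFinset.card * (1 - p) ^ (n.choose 2 - G.edgeFinset.card) else 0)

/-- The graph `G_t` of the random graph process determined by an ordering `σ` of the
potential edges: `G_t` has as edges the first `t` edges according to `σ`. -/
noncomputable def processGraph (n : ℕ)
    (σ : Fin (n.choose 2) ≃ {e : Sym2 (Fin n) // ¬ e.IsDiag}) (t : ℕ) :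
    SimpleGraph (Fin n) :=
  SimpleGraph.fromEdgeSet {e | ∃ k : Fin (n.choose 2), (k : ℕ) < t ∧ (σ k : Sym2 (Fin n)) = e}

/-- The probability that the random graph process `{G_t}` on `{1,…,n}` (viewed as the
trajectory `t ↦ G_t`, chosen uniformly over all orderings of the potential edges)
satisfies the property `P`. -/
noncomputable def processProb (n : ℕ) (P : (ℕ → SimpleGraph (Fin n)) → Prop) : ℝ :=
  (∑ σ : Fin (n.choose 2) ≃ {e : Sym2 (Fin n) // ¬ e.IsDiag},
      (if P (processGraph n σ) then (1 : ℝ) else 0)) /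
    (Fintype.card (Fin (n.choose 2) ≃ {e : Sym2 (Fin n) // ¬ e.IsDiag}) : ℝ)

/-- `μ(G)`: the minimum number of non-edges of `G` whose addition to `G` yields a
Hamiltonian graph. -/
noncomputable def mu {n : ℕ} (G : SimpleGraph (Fin n)) : ℕ :=
  sInf { m | ∃ F : Finset (Sym2 (Fin n)),
    F.card = m ∧ (∀ e ∈ F, ¬ e.IsDiag ∧ e ∉ G.edgeSet) ∧
    (G ⊔ SimpleGraph.fromEdgeSet (F : Set (Sym2 (Fin n)))).IsHamiltonian }

/-- A graph (on `n` vertices) contains a cycle of length `ℓ`. -/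
def HasCycleLength {n : ℕ} (G : SimpleGraph (Fin n)) (ℓ : ℕ) : Prop :=
  ∃ (v : Fin n) (w : G.Walk v v), w.IsCycle ∧ w.length = ℓ

/-- A graph on `n` vertices is pancyclic if it has cycles of all lengths `3 ≤ ℓ ≤ n`. -/
def IsPancyclic {n : ℕ} (G : SimpleGraph (Fin n)) : Prop :=
  ∀ ℓ : ℕ, 3 ≤ ℓ → ℓ ≤ n → HasCycleLength G ℓ

/-- `μ̂(G)`: the minimum number of non-edges of `G` whose addition to `G` yields a
pancyclic graph. -/
noncomputable def muHat {n : ℕ} (G : SimpleGraph (Fin n)) : ℕ :=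
  sInf { m | ∃ F : Finset (Sym2 (Fin n)),
    F.card = m ∧ (∀ e ∈ F, ¬ e.IsDiag ∧ e ∉ G.edgeSet) ∧
    IsPancyclic (G ⊔ SimpleGraph.fromEdgeSet (F : Set (Sym2 (Fin n)))) }

/-- `n_i(G)`: the number of vertices of degree `i` in `G`. -/
noncomputable def degCount {n : ℕ} (G : SimpleGraph (Fin n)) (i : ℕ) : ℕ :=
  (Finset.univ.filter fun v => G.degree v = i).card

/-- The number of copies of the 3-star `K_{1,3}` in `G`: a copy is a vertex together
with a choice of three of its neighbours. -/
noncomputable def threeStarCount {n : ℕ} (G : SimpleGraph (Fin n)) : ℕ :=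
  ∑ v : Fin n, Nat.choose (G.degree v) 3

/-- `t_i^*`: the minimum `t` such that `G_t` spans at least `i` copies of `K_{1,3}`. -/
noncomputable def tStar (n : ℕ) (i : ℕ) (Gs : ℕ → SimpleGraph (Fin n)) : ℕ :=
  sInf { t | i ≤ threeStarCount (Gs t) }

/-- The number of 3-spiders of `G`: a 3-spider is determined by a centre `w` together with
three degree-2 vertices adjacent to `w` whose incident edges span a tree on 7 vertices. -/
noncomputable def spiderCount {n : ℕ} (G : SimpleGraph (Fin n)) : ℕ :=
  (Finset.univ.filter fun p : Fin n × Finset (Fin n) =>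
    p.2.card = 3 ∧ (∀ a ∈ p.2, G.degree a = 2 ∧ G.Adj p.1 a) ∧
    (insert p.1 p.2 ∪ p.2.biUnion fun a => G.neighborFinset a).card = 7).card

/-- `t_i`: the minimum `t` greater than `10n` such that `G_t` spans fewer than `i`
distinct 3-spiders. -/
noncomputable def tSpider (n : ℕ) (i : ℕ) (Gs : ℕ → SimpleGraph (Fin n)) : ℕ :=
  sInf { t | 10 * n < t ∧ spiderCount (Gs t) < i }

/-- The defining property of the strong 4-core: every vertex of `S ∪ N(S)` has at least
4 neighbours in `S`. -/
def CorePred {n : ℕ} (G : SimpleGraph (Fin n)) (S : Set (Fin n)) : Prop :=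
  ∀ v : Fin n, (v ∈ S ∨ ∃ s ∈ S, G.Adj v s) → 4 ≤ (S ∩ {u | G.Adj v u}).ncard

/-- `C(G)`: the vertex set of the strong 4-core of `G`, i.e. the maximal set satisfying
`CorePred` (the union of all such sets). -/
def coreSet {n : ℕ} (G : SimpleGraph (Fin n)) : Set (Fin n) :=
  ⋃₀ { S | CorePred G S }

/-- `B(G) = N(C(G))`, the external neighbourhood of the strong 4-core. -/
def bSet {n : ℕ} (G : SimpleGraph (Fin n)) : Set (Fin n) :=
  { v | v ∉ coreSet G ∧ ∃ u ∈ coreSet G, G.Adj v u }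

/-- `A(G) = V(G) \ (B(G) ∪ C(G))`. -/
def aSet {n : ℕ} (G : SimpleGraph (Fin n)) : Set (Fin n) :=
  { v | v ∉ coreSet G ∧ v ∉ bSet G }

/-- `G^{AB}`: the subgraph of `G` induced on `A(G) ∪ B(G)`, viewed as a graph on the
full vertex set (all vertices of `C(G)` are isolated in it). -/
def GAB {n : ℕ} (G : SimpleGraph (Fin n)) : SimpleGraph (Fin n) :=
  SimpleGraph.fromEdgeSet { e | e ∈ G.edgeSet ∧ ∀ v ∈ e, v ∉ coreSet G }

/-- The connected components of `G^{AB}` (those components of the ambient graph `GAB G`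
all of whose vertices lie in `A(G) ∪ B(G)`). -/
def abComponents {n : ℕ} (G : SimpleGraph (Fin n)) : Set ((GAB G).ConnectedComponent) :=
  { c | ∀ v ∈ c.supp, v ∉ coreSet G }

/-- `S(G)`: the set of connected components of `G^{AB}` with exactly one vertex in `A(G)`
and exactly three vertices in `B(G)`. -/
def sComponents {n : ℕ} (G : SimpleGraph (Fin n)) : Set ((GAB G).ConnectedComponent) :=
  { c | (c.supp ∩ aSet G).ncard = 1 ∧ (c.supp ∩ bSet G).ncard = 3 }

/-- A linear forest: a graph all of whose components are paths. Its components give a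
disjoint path cover of any graph containing it. -/
noncomputable def IsLinearForest {n : ℕ} (P : SimpleGraph (Fin n)) : Prop :=
  P.IsAcyclic ∧ ∀ v : Fin n, P.degree v ≤ 2

/-- `a(G)`: the minimum over disjoint path covers `Q` of `G^{AB}` of the number of
endpoints of paths of `Q` lying in `A(G)` (a vertex forming a path of length 0 counts
twice).  A disjoint path cover is encoded as a linear forest `P ≤ G^{AB}`; a vertex
`v ∈ A(G)` then contributes `2 - deg_P(v)` endpoints. -/
noncomputable def aVal {n : ℕ} (G : SimpleGraph (Fin n)) : ℕ :=
  sInf { m | ∃ P : SimpleGraph (Fin n), P ≤ GAB G ∧ IsLinearForest P ∧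
    m = ∑ v : Fin n, (if v ∈ aSet G then 2 - P.degree v else 0) }

/-- `μ'(G) = ⌈a(G)/2⌉`. -/
noncomputable def muPrime {n : ℕ} (G : SimpleGraph (Fin n)) : ℕ :=
  (aVal G + 1) / 2

/-! ### Path covers of forests -/

section PathCover

variable {V : Type*}

/-- The number of positions of the list `l` at which a path of `G` has to be interrupted:
a position counts if it is the last one, or if its entry is not adjacent to the next entry. -/
noncomputable def breaks (G : SimpleGraph V) : List V → ℕ
  | [] => 0
  | [_] => 1
  | a :: b :: l => (if G.Adj a b then 0 else 1) + breaks G (b :: l)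

lemma breaks_append_le (G : SimpleGraph V) (l : List V) :
    ∀ p : List V, p.IsChain G.Adj → breaks G (p ++ l) ≤ breaks G l + 1
  | [], _ => by simp
  | [a], _ => by
    cases l with
    | nil => simp [breaks]
    | cons b l => simp only [List.cons_append, List.nil_append, breaks]; split_ifs <;> omega
  | a :: b :: p, h => by
    have h' := List.isChain_cons_cons.1 h
    have := breaks_append_le G l (b :: p) h'.2
    simpa [breaks, h'.1] using this

lemma breaks_flatten_le (G : SimpleGraph V) (ps : List (List V))
    (h : ∀ p ∈ ps, p.IsChain G.Adj) : breaks G ps.flatten ≤ ps.length := by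
  induction ps with
  | nil => simp [breaks]
  | cons p ps ih =>
    have h1 := breaks_append_le G ps.flatten p (h p (by simp))
    have h2 := ih fun q hq => h q (by simp [hq])
    simp only [List.flatten_cons, List.length_cons]
    omega

lemma breaks_eq_card (G : SimpleGraph V) (l : List V) :
    breaks G l = ((Finset.range l.length).filter fun j =>
      ¬ ∃ a b, l[j]? = some a ∧ l[j + 1]? = some b ∧ G.Adj a b).card := by
  induction l with
  | nil => simp [breaks]
  | cons a l ih =>
    cases l with
    | nil => simp [breaks]
    | cons b l =>
      rw [breaks, ih, Finset.card_filter, Finset.card_filter, List.length_cons (as := b :: l),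
        Finset.sum_range_succ', add_comm]
      congr 1
      simp [ite_not]

/-- A path cover of `G`: a list of paths of `G` (lists of consecutively adjacent vertices, the
empty list being allowed) in which every vertex occurs exactly once. -/
def IsPathCover [Fintype V] (G : SimpleGraph V) (ps : List (List V)) : Prop :=
  (∀ p ∈ ps, p.IsChain G.Adj) ∧ ps.flatten.Perm Finset.univ.toList

lemma reachable_of_isChain (G : SimpleGraph V) :
    ∀ (a : V) (p : List V), (a :: p).IsChain G.Adj → ∀ x ∈ a :: p, G.Reachable a x
  | a, [], _, x, hx => by
    simp only [List.mem_singleton] at hx; subst hx; exact SimpleGraph.Reachable.refl _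
  | a, b :: p, h, x, hx => by
    have h' := List.isChain_cons_cons.1 h
    rcases List.mem_cons.1 hx with rfl | hx
    · exact SimpleGraph.Reachable.refl _
    · exact h'.1.reachable.trans (reachable_of_isChain G b p h'.2 x hx)

lemma reachable_of_mem_isChain (G : SimpleGraph V) (p : List V) (h : p.IsChain G.Adj)
    {x y : V} (hx : x ∈ p) (hy : y ∈ p) : G.Reachable x y := by
  cases p with
  | nil => simp at hx
  | cons a p =>
    exact (reachable_of_isChain G a p h x hx).symm.trans (reachable_of_isChain G a p h y hy)

/-- A vertex with at most one neighbour is an end of the path through it, so after a possible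
reversal it is the last one. -/
lemma exists_isChain_concat [Fintype V] (G : SimpleGraph V) (p : List V) (h : p.IsChain G.Adj)
    (hn : p.Nodup) {u : V} (hu : u ∈ p) (hd : G.degree u ≤ 1) :
    ∃ s : List V, (s ++ [u]).Perm p ∧ (s ++ [u]).IsChain G.Adj := by
  obtain ⟨s, t, rfl⟩ := List.append_of_mem hu
  rcases List.eq_nil_or_concat s with rfl | ⟨s', a, rfl⟩
  · refine ⟨t.reverse, ?_, ?_⟩
    · have : t.reverse ++ [u] = (u :: t).reverse := by simp
      rw [this]; simpa using List.reverse_perm (u :: t)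
    · have : t.reverse ++ [u] = (u :: t).reverse := by simp
      rw [this, List.isChain_reverse]
      simpa [SimpleGraph.adj_comm, flip] using h
  · cases t with
    | nil => exact ⟨_, List.Perm.refl _, h⟩
    | cons b t =>
      exfalso
      have hab : a ≠ b := by
        rintro rfl
        simp [List.nodup_append] at hn
      have h1 : G.Adj a u ∧ G.Adj u b := by
        simp [List.isChain_append] at h
        tauto
      have : 1 < G.degree u := by
        rw [← SimpleGraph.card_neighborFinset_eq_degree, Finset.one_lt_card]
        exact ⟨a, by simpa using h1.1.symm, b, by simpa using h1.2, hab⟩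
      omega

/-- An edge of `G` joining ends of two distinct paths of a cover of `G' ≤ G` merges these paths. -/
lemma IsPathCover.join [Fintype V] {G' G : SimpleGraph V} (hle : G' ≤ G) {ps : List (List V)}
    (hps : IsPathCover G' ps) {u v : V} (huv : G.Adj u v) (hr : ¬ G'.Reachable u v)
    (hu : G'.degree u ≤ 1) (hv : G'.degree v ≤ 1) :
    ∃ qs, IsPathCover G qs ∧ qs.length + 1 = ps.length := by
  obtain ⟨hch, hperm⟩ := hps
  have hnd : ps.flatten.Nodup := hperm.nodup_iff.2 (Finset.nodup_toList _)
  have hmem : ∀ w, w ∈ ps.flatten := fun w => hperm.mem_iff.2 (by simp)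
  obtain ⟨p, hp, hup⟩ := List.mem_flatten.1 (hmem u)
  obtain ⟨q, hq, hvq⟩ := List.mem_flatten.1 (hmem v)
  have hpq : q ≠ p := by
    rintro rfl
    exact hr (reachable_of_mem_isChain G' q (hch q hq) hup hvq)
  have hq' : q ∈ ps.erase p := (List.mem_erase_of_ne hpq).2 hq
  have hps : ps.Perm (p :: q :: (ps.erase p).erase q) :=
    (List.perm_cons_erase hp).trans ((List.perm_cons_erase hq').cons p)
  have hndp : p.Nodup := (List.nodup_flatten.1 hnd).1 p hp
  have hndq : q.Nodup := (List.nodup_flatten.1 hnd).1 q hq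
  obtain ⟨s, hs, hsc⟩ := exists_isChain_concat G' p (hch p hp) hndp hup hu
  obtain ⟨t, ht, htc⟩ := exists_isChain_concat G' q (hch q hq) hndq hvq hv
  refine ⟨((s ++ [u]) ++ (t ++ [v]).reverse) :: (ps.erase p).erase q, ⟨?_, ?_⟩, ?_⟩
  · intro r hr
    rcases List.mem_cons.1 hr with rfl | hr
    · refine List.isChain_append.2 ⟨hsc.imp fun _ _ h => hle h, ?_, ?_⟩
      · rw [List.isChain_reverse]
        exact htc.imp fun _ _ h => hle h.symm
      · simpa using huv
    · exact (hch r (List.mem_of_mem_erase (List.mem_of_mem_erase hr))).imp fun _ _ h => hle h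
  · refine List.Perm.trans ?_ hperm
    refine List.Perm.trans ?_ hps.flatten.symm
    simp only [List.flatten_cons, ← List.append_assoc]
    refine List.Perm.append_right _ ?_
    have := hs.append ((List.reverse_perm (t ++ [v])).trans ht)
    simpa using this
  · simpa using hps.length_eq.symm

/-- A forest has a path cover with at most `n - e(G) + ∑ (deg v - 2)⁺` paths: as long as some
degree exceeds `2`, give up an edge there; once all degrees are at most `2`, each edge saves a
path. -/
lemma exists_isPathCover [Fintype V] : ∀ (m : ℕ) (G : SimpleGraph V), G.edgeFinset.card = m →
    G.IsAcyclic → ∃ ps, IsPathCover G ps ∧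
      ps.length + m ≤ Fintype.card V + ∑ v, (G.degree v - 2) := by
  intro m
  induction m with
  | zero =>
    intro G _ _
    refine ⟨Finset.univ.toList.map fun v => [v], ⟨?_, ?_⟩, ?_⟩
    · intro p hp
      obtain ⟨v, -, rfl⟩ := List.mem_map.1 hp
      simp
    · rw [← List.flatMap_def]; simp
    · simp
  | succ m ih =>
    intro G hm hG
    -- In a forest every edge is a bridge, so removing it separates its two ends.
    have key : ∀ u v, G.Adj u v → ∃ G' : SimpleGraph V, G' ≤ G ∧ G'.edgeFinset.card = m ∧
        (G'.degree u + 1 = G.degree u) ∧ (G'.degree v + 1 = G.degree v) ∧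
        ¬ G'.Reachable u v := by
      intro u v huv
      obtain ⟨G', hG'⟩ : ∃ G', G' = G.deleteEdges {s(u, v)} := ⟨_, rfl⟩
      have hle : G' ≤ G := hG' ▸ G.deleteEdges_le _
      have hE : G'.edgeFinset = G.edgeFinset.erase s(u, v) := by
        ext e; simp [hG', and_comm]
      have hNu : G'.neighborFinset u = (G.neighborFinset u).erase v := by
        ext w; simp [hG']; grind
      have hNv : G'.neighborFinset v = (G.neighborFinset v).erase u := by
        ext w; simp [hG']; grind
      refine ⟨G', hle, ?_, ?_, ?_, ?_⟩
      · rw [hE, Finset.card_erase_of_mem (by simpa using huv), hm]; rfl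
      · rw [← SimpleGraph.card_neighborFinset_eq_degree, hNu,
          Finset.card_erase_add_one (by simpa using huv),
          SimpleGraph.card_neighborFinset_eq_degree]
      · rw [← SimpleGraph.card_neighborFinset_eq_degree, hNv,
          Finset.card_erase_add_one (by simpa using huv.symm),
          SimpleGraph.card_neighborFinset_eq_degree]
      · rw [hG']
        exact SimpleGraph.isBridge_iff.1 (SimpleGraph.isAcyclic_iff_forall_adj_isBridge.1 hG huv)
    have hdeg : ∀ G' : SimpleGraph V, G' ≤ G → ∀ v, G'.degree v - 2 ≤ G.degree v - 2 :=
      fun G' h v => Nat.sub_le_sub_right (SimpleGraph.degree_le_of_le h) _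
    by_cases h3 : ∃ v, 3 ≤ G.degree v
    · obtain ⟨v, hv⟩ := h3
      obtain ⟨w, hw⟩ := (G.degree_pos_iff_exists_adj v).1 (by omega)
      obtain ⟨G', hle, hc, hd, -, -⟩ := key v w hw
      obtain ⟨ps, hps, hl⟩ := ih G' hc (hG.anti hle)
      refine ⟨ps, ⟨fun p hp => (hps.1 p hp).imp fun _ _ h => hle h, hps.2⟩, ?_⟩
      have : ∑ v, (G'.degree v - 2) < ∑ v, (G.degree v - 2) :=
        Finset.sum_lt_sum (fun x _ => hdeg G' hle x) ⟨v, Finset.mem_univ _, by omega⟩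
      omega
    · push Not at h3
      have : G.edgeFinset.Nonempty := by
        rw [← Finset.card_pos]; omega
      obtain ⟨e, he⟩ := this
      induction e with
      | h u v =>
      have huv : G.Adj u v := by simpa using he
      obtain ⟨G', hle, hc, hdu, hdv, hr⟩ := key u v huv
      obtain ⟨ps, hps, hl⟩ := ih G' hc (hG.anti hle)
      have h1 := h3 u
      have h2 := h3 v
      obtain ⟨qs, hqs, hql⟩ := hps.join hle huv hr (by omega) (by omega)
      have : ∑ v, (G'.degree v - 2) ≤ ∑ v, (G.degree v - 2) :=
        Finset.sum_le_sum fun x _ => hdeg G' hle x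
      exact ⟨qs, hqs, by omega⟩

end PathCover

/-! ### Hamiltonian completion of sparse forests -/

section Completion

/-- An ordering of all vertices closes up to a Hamiltonian cycle once an edge is added at each
of its breaks. -/
lemma exists_completion {n : ℕ} (hn : 3 ≤ n) (G : SimpleGraph (Fin n)) (l : List (Fin n))
    (hl : l.Perm Finset.univ.toList) :
    ∃ F : Finset (Sym2 (Fin n)), F.card ≤ breaks G l ∧ (∀ e ∈ F, ¬ e.IsDiag ∧ e ∉ G.edgeSet) ∧
      (G ⊔ SimpleGraph.fromEdgeSet (F : Set (Sym2 (Fin n)))).IsHamiltonian := by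
  obtain ⟨k, rfl⟩ : ∃ k, n = k + 3 := ⟨n - 3, by omega⟩
  have hlen : l.length = k + 3 := by simpa using hl.length_eq
  have hnd : l.Nodup := hl.nodup_iff.2 (Finset.nodup_toList _)
  let f : Fin (k + 3) → Fin (k + 3) := fun j => l[(j : ℕ)]'(by omega)
  have hf : Function.Injective f := by
    intro a b hab
    exact Fin.ext ((List.Nodup.getElem_inj_iff hnd).1 hab)
  have hfb : Function.Bijective f := Finite.injective_iff_bijective.1 hf
  have hne : ∀ j : Fin (k + 3), j ≠ j + 1 := by
    intro j h
    have := congrArg (fun x => x - j) h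
    simp at this
  refine ⟨(Finset.univ.filter fun j => ¬ G.Adj (f j) (f (j + 1))).image
    fun j => s(f j, f (j + 1)), ?_, ?_, ?_⟩
  · refine Finset.card_image_le.trans ?_
    rw [breaks_eq_card]
    refine Finset.card_le_card_of_injOn (fun j => (j : ℕ)) ?_ fun a _ b _ h => Fin.ext h
    intro j hj
    simp only [Finset.coe_filter, Finset.mem_univ, true_and, Set.mem_ofPred_eq] at hj
    simp only [Finset.coe_filter, Finset.mem_range, Set.mem_ofPred_eq]
    refine ⟨by omega, ?_⟩
    rintro ⟨a, b, ha, hb, hab⟩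
    obtain ⟨h1, rfl⟩ := List.getElem?_eq_some_iff.1 ha
    obtain ⟨h2, rfl⟩ := List.getElem?_eq_some_iff.1 hb
    apply hj
    have : ((j + 1 : Fin (k + 3)) : ℕ) = j + 1 := by
      rw [Fin.val_add_one_of_lt']
      omega
    simpa only [f, this] using hab
  · intro e he
    obtain ⟨j, hj, rfl⟩ := Finset.mem_image.1 he
    simp only [Finset.mem_filter, Finset.mem_univ, true_and] at hj
    refine ⟨?_, by simpa using hj⟩
    simpa using fun h => hne j (hf h)
  · set F := (Finset.univ.filter fun j => ¬ G.Adj (f j) (f (j + 1))).image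
      fun j => s(f j, f (j + 1)) with hF
    have hadj : ∀ j, (G ⊔ SimpleGraph.fromEdgeSet (F : Set (Sym2 (Fin (k + 3))))).Adj
        (f j) (f (j + 1)) := by
      intro j
      by_cases h : G.Adj (f j) (f (j + 1))
      · exact Or.inl h
      · refine Or.inr ?_
        rw [SimpleGraph.fromEdgeSet_adj]
        refine ⟨?_, fun h => hne j (hf h)⟩
        exact Finset.mem_coe.2 (Finset.mem_image.2 ⟨j, by simpa using h, rfl⟩)
    let φ : SimpleGraph.cycleGraph (k + 3) →g
        (G ⊔ SimpleGraph.fromEdgeSet (F : Set (Sym2 (Fin (k + 3))))) :=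
      ⟨f, by
        intro a b hab
        rcases SimpleGraph.cycleGraph_adj.1 hab with h | h
        · have := hadj b
          rw [← h, add_sub_cancel] at this
          exact this.symm
        · have := hadj a
          rw [← h, add_sub_cancel] at this
          exact this⟩
    have hham : (SimpleGraph.cycleGraph.cycle k).IsHamiltonianCycle :=
      SimpleGraph.Walk.isHamiltonianCycle_iff_isCycle_and_length_eq.2
        ⟨SimpleGraph.cycleGraph.isCycle_cycle, by simp [SimpleGraph.cycleGraph.length_cycle]⟩
    exact fun _ => ⟨_, _, hham.map (f := φ) hfb⟩

/-- Each vertex of degree at least `3` has an edge avoiding a given Hamiltonian cycle, and these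
edges are distinct if the vertices in question are pairwise non-adjacent. -/
lemma le_card_of_isHamiltonian {n : ℕ} (hn : 3 ≤ n) (G : SimpleGraph (Fin n))
    (D : Finset (Fin n)) (hD : ∀ v ∈ D, 3 ≤ G.degree v)
    (hind : ∀ u ∈ D, ∀ v ∈ D, ¬ G.Adj u v) (F : Finset (Sym2 (Fin n)))
    (hF : (G ⊔ SimpleGraph.fromEdgeSet (F : Set (Sym2 (Fin n)))).IsHamiltonian) :
    n + D.card ≤ F.card + G.edgeFinset.card := by
  obtain ⟨a, p, hp⟩ := hF (by simp; omega)
  have hCcard : p.edges.toFinset.card = n := by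
    rw [List.toFinset_card_of_nodup hp.isCycle.edges_nodup, SimpleGraph.Walk.length_edges,
      hp.length_eq, Fintype.card_fin]
  have hsub : p.edges.toFinset \ G.edgeFinset ⊆ F := by
    intro e he
    rw [Finset.mem_sdiff, List.mem_toFinset, SimpleGraph.mem_edgeFinset] at he
    have := p.edges_subset_edgeSet he.1
    rw [SimpleGraph.edgeSet_sup, SimpleGraph.edgeSet_fromEdgeSet] at this
    rcases this with h | h
    · exact absurd h he.2
    · exact h.1
  have hmiss : ∀ v ∈ D, ∃ w, G.Adj v w ∧ s(v, w) ∉ p.edges := by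
    intro v hv
    by_contra! hcon
    have h2 := hp.isCycle.ncard_neighborSet_toSubgraph_eq_two (hp.mem_support v)
    have hfin : (p.toSubgraph.neighborSet v).Finite := Set.toFinite _
    have h3 : (G.neighborFinset v : Set (Fin n)) ⊆ p.toSubgraph.neighborSet v := by
      intro w hw
      have hw' : G.Adj v w := by simpa using hw
      rw [SimpleGraph.Subgraph.mem_neighborSet, ← SimpleGraph.Subgraph.mem_edgeSet,
        SimpleGraph.Walk.mem_edges_toSubgraph]
      exact hcon w hw'
    have h4 := Set.ncard_le_ncard h3 hfin
    rw [Set.ncard_coe_finset, SimpleGraph.card_neighborFinset_eq_degree, h2] at h4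
    have := hD v hv
    omega
  choose! g hg1 hg2 using hmiss
  have hinj : D.card ≤ (G.edgeFinset \ p.edges.toFinset).card := by
    refine Finset.card_le_card_of_injOn (fun v => s(v, g v)) ?_ ?_
    · intro v hv
      have hv' : v ∈ D := hv
      have h1 := hg1 v hv'
      have h2 := hg2 v hv'
      simp [h1, h2]
    · intro u hu v hv huv
      by_contra hne
      simp only [Sym2.eq_iff] at huv
      rcases huv with h | h
      · exact hne h.1
      · exact hind u hu v hv (h.2 ▸ hg1 u hu)
  have h1 := Finset.card_le_card hsub
  have h2 := Finset.card_sdiff_add_card_inter p.edges.toFinset G.edgeFinset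
  have h3 := Finset.card_sdiff_add_card_inter G.edgeFinset p.edges.toFinset
  rw [Finset.inter_comm] at h3
  omega

/-- The deterministic part: in a forest of maximum degree at most `3` whose vertices of
degree `3` are pairwise non-adjacent, an optimal set of added edges has
`n - e(G) + n₃(G)` elements. By the handshake lemma this is `n₀ + (n₁ + n₃) / 2`, where the division
is exact, and `n₃` is the number of copies of `K_{1,3}`. -/
lemma mu_eq {n : ℕ} (hn : 3 ≤ n) (G : SimpleGraph (Fin n)) (hG : G.IsAcyclic)
    (hdeg : ∀ v, G.degree v ≤ 3)
    (hind : ∀ u v, G.degree u = 3 → G.degree v = 3 → ¬ G.Adj u v) :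
    mu G = degCount G 0 + (degCount G 1 + threeStarCount G + 1) / 2 := by
  have hlow : ∀ F : Finset (Sym2 (Fin n)),
      (G ⊔ SimpleGraph.fromEdgeSet (F : Set (Sym2 (Fin n)))).IsHamiltonian →
      n + degCount G 3 ≤ F.card + G.edgeFinset.card := by
    intro F hF
    refine le_card_of_isHamiltonian hn G (Finset.univ.filter fun v => G.degree v = 3) ?_ ?_ F hF
    · intro v hv
      simp only [Finset.mem_filter] at hv
      omega
    · intro u hu v hv
      simp only [Finset.mem_filter, Finset.mem_univ, true_and] at hu hv
      exact hind u v hu hv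
  have h3 : ∑ v, (G.degree v - 2) = degCount G 3 := by
    rw [degCount, Finset.card_filter]
    refine Finset.sum_congr rfl fun v _ => ?_
    have := hdeg v
    interval_cases G.degree v <;> simp
  have hstar : threeStarCount G = degCount G 3 := by
    rw [threeStarCount, degCount, Finset.card_filter]
    refine Finset.sum_congr rfl fun v _ => ?_
    have := hdeg v
    interval_cases G.degree v <;> simp [Nat.choose]
  -- Handshake lemma, with the degree sum written through the numbers `n₀`, `n₁` and `n₃`.
  have hsum : 2 * G.edgeFinset.card + 2 * degCount G 0 + degCount G 1 = 2 * n + degCount G 3 := by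
    rw [← G.sum_degrees_eq_twice_card_edges]
    have : 2 * n = ∑ _v : Fin n, 2 := by simp [mul_comm]
    rw [this]
    simp only [degCount, Finset.card_filter, Finset.mul_sum, ← Finset.sum_add_distrib]
    refine Finset.sum_congr rfl fun v _ => ?_
    have := hdeg v
    interval_cases G.degree v <;> simp
  obtain ⟨ps, hps, hl⟩ := exists_isPathCover _ G rfl hG
  obtain ⟨F, hFc, hF1, hF2⟩ := exists_completion hn G ps.flatten hps.2
  have hb := breaks_flatten_le G ps hps.1
  rw [h3, Fintype.card_fin] at hl
  have hF3 := hlow F hF2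
  have hmu : mu G = F.card := by
    refine le_antisymm (Nat.sInf_le ⟨F, rfl, hF1, hF2⟩) ?_
    refine le_csInf ⟨_, F, rfl, hF1, hF2⟩ ?_
    rintro m ⟨F', rfl, -, hF'⟩
    have := hlow F' hF'
    omega
  rw [hstar, hmu]
  omega

end Completion

/-! ### Locally sparse graphs -/

section Sparse

/-- Some `k` vertices of `G` span at least `m` edges. -/
def HasDense {n : ℕ} (G : SimpleGraph (Fin n)) (k m : ℕ) : Prop :=
  ∃ S Q : Finset _, S.card = k ∧ Q.card = m ∧ Q ⊆ G.edgeFinset ∧ Q ⊆ S.sym2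

lemma HasDense.mk_le {n : ℕ} {G : SimpleGraph (Fin n)} {k m : ℕ} (hk : k ≤ n)
    (S : Finset (Fin n)) (Q : Finset (Sym2 (Fin n))) (hS : S.card ≤ k) (hm : Q.card = m)
    (hQ : Q ⊆ G.edgeFinset) (hQS : Q ⊆ S.sym2) : HasDense G k m := by
  obtain ⟨S', hSS', hS'⟩ := Finset.exists_superset_card_eq hS (by simpa using hk)
  exact ⟨S', Q, hS', hm, hQ, hQS.trans (Finset.sym2_mono hSS')⟩

lemma HasDense.of_walk {n : ℕ} {G : SimpleGraph (Fin n)} {k : ℕ} (hk : k ≤ n) {u v : Fin n}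
    (p : G.Walk u v) (hp : p.IsTrail) (hS : p.support.toFinset.card ≤ k) :
    HasDense G k p.length := by
  refine HasDense.mk_le hk p.support.toFinset p.edges.toFinset hS ?_ ?_ ?_
  · rw [List.toFinset_card_of_nodup hp.edges_nodup, SimpleGraph.Walk.length_edges]
  · intro e he
    rw [SimpleGraph.mem_edgeFinset]
    exact p.edges_subset_edgeSet (by simpa using he)
  · intro e he
    rw [Finset.mem_sym2_iff]
    intro a ha
    rw [List.mem_toFinset] at he ⊢
    exact SimpleGraph.Walk.mem_support_of_mem_edges he ha

lemma card_support_cycle {n : ℕ} {G : SimpleGraph (Fin n)} {u : Fin n} (p : G.Walk u u)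
    (hp : p.IsCycle) : p.support.toFinset.card ≤ p.length := by
  have h1 : p.support.toFinset = p.support.tail.toFinset := by
    rw [← p.cons_tail_support, List.toFinset_cons, List.tail_cons]
    exact Finset.insert_eq_of_mem (by simpa using p.end_mem_tail_support hp.not_nil)
  rw [h1]
  refine (List.toFinset_card_le _).trans ?_
  simp

/-- A triangle or a 4-cycle is itself a forbidden subgraph, and a longer cycle contains a path with
four edges. -/
lemma isAcyclic_of_sparse {n : ℕ} (hn : 5 ≤ n) {G : SimpleGraph (Fin n)}
    (h5 : ¬ HasDense G 5 4) (h3 : ¬ HasDense G 3 3) : G.IsAcyclic := by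
  intro u p hp
  have hc := card_support_cycle p hp
  have hl := hp.three_le_length
  rcases Nat.lt_or_ge 4 p.length with h | h
  · have hpath := hp.isPath_take h
    refine h5 ?_
    have hlen : (p.take 4).length = 4 := by
      rw [SimpleGraph.Walk.take_length]; omega
    have := HasDense.of_walk hn (p.take 4) hpath.isTrail
      ((List.toFinset_card_le _).trans (by simp [hlen]))
    rwa [hlen] at this
  · have : p.length = 3 ∨ p.length = 4 := by omega
    rcases this with h' | h'
    · exact h3 (h' ▸ HasDense.of_walk (by omega) p hp.isTrail hc)
    · exact h5 (h' ▸ HasDense.of_walk hn p hp.isTrail (by omega))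

lemma image_star_card {n : ℕ} (v : Fin n) (W : Finset (Fin n)) :
    (W.image fun w => s(v, w)).card = W.card :=
  Finset.card_image_of_injective _ fun _ _ h => Sym2.congr_right.1 h

lemma degree_le_of_sparse {n : ℕ} (hn : 5 ≤ n) {G : SimpleGraph (Fin n)}
    (h5 : ¬ HasDense G 5 4) (v : Fin n) : G.degree v ≤ 3 := by
  by_contra! hv
  rw [← SimpleGraph.card_neighborFinset_eq_degree] at hv
  obtain ⟨W, hW, hWc⟩ := Finset.exists_subset_card_eq (show 4 ≤ _ from hv)
  refine h5 (HasDense.mk_le hn (insert v W) (W.image fun w => s(v, w)) ?_ ?_ ?_ ?_)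
  · exact (Finset.card_insert_le _ _).trans (by omega)
  · rw [image_star_card, hWc]
  · intro e he
    obtain ⟨w, hw, rfl⟩ := Finset.mem_image.1 he
    simpa using hW hw
  · intro e he
    obtain ⟨w, hw, rfl⟩ := Finset.mem_image.1 he
    simp [hw]

/-- Two adjacent vertices `u`, `v` of degree `3` would yield four edges on five vertices: the star at
`u` together with an edge from `v` to a vertex `c ≠ u`. -/
lemma not_adj_of_sparse {n : ℕ} (hn : 5 ≤ n) {G : SimpleGraph (Fin n)}
    (h5 : ¬ HasDense G 5 4) (u v : Fin n) (hu : G.degree u = 3) (hv : G.degree v = 3) :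
    ¬ G.Adj u v := by
  intro huv
  obtain ⟨c, hc, hcu⟩ : ∃ c ∈ G.neighborFinset v, c ≠ u :=
    Finset.exists_mem_ne (by rw [SimpleGraph.card_neighborFinset_eq_degree]; omega) u
  have hvc : G.Adj v c := by simpa using hc
  have hne : v ≠ u := huv.ne'
  rw [← SimpleGraph.card_neighborFinset_eq_degree] at hu
  refine h5 (HasDense.mk_le hn (insert u (insert c (G.neighborFinset u)))
    (insert s(v, c) ((G.neighborFinset u).image fun w => s(u, w))) ?_ ?_ ?_ ?_)
  · have h1 := Finset.card_insert_le u (insert c (G.neighborFinset u))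
    have h2 := Finset.card_insert_le c (G.neighborFinset u)
    omega
  · rw [Finset.card_insert_of_notMem, image_star_card, hu]
    simp only [Finset.mem_image, Sym2.eq_iff, not_exists, not_and]
    rintro w - (h | h)
    · exact hne h.1.symm
    · exact hcu h.1.symm
  · intro e he
    rcases Finset.mem_insert.1 he with rfl | he
    · simpa using hvc
    · obtain ⟨w, hw, rfl⟩ := Finset.mem_image.1 he
      simpa using hw
  · intro e he
    rcases Finset.mem_insert.1 he with rfl | he
    · simp [huv]
    · obtain ⟨w, hw, rfl⟩ := Finset.mem_image.1 he
      have : G.Adj u w := by simpa using hw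
      simp [this]

lemma mu_eq_of_sparse {n : ℕ} (hn : 5 ≤ n) {G : SimpleGraph (Fin n)}
    (h5 : ¬ HasDense G 5 4) (h3 : ¬ HasDense G 3 3) :
    mu G = degCount G 0 + (degCount G 1 + threeStarCount G + 1) / 2 :=
  mu_eq (by omega) G (isAcyclic_of_sparse hn h5 h3) (degree_le_of_sparse hn h5)
    (not_adj_of_sparse hn h5)

lemma HasDense.mono {n : ℕ} {G G' : SimpleGraph (Fin n)} (h : G ≤ G') {k m : ℕ}
    (hd : HasDense G k m) : HasDense G' k m := by
  obtain ⟨S, Q, hS, hQ, hQG, hQS⟩ := hd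
  exact ⟨S, Q, hS, hQ, hQG.trans (SimpleGraph.edgeFinset_mono h), hQS⟩

lemma threeStarCount_mono {n : ℕ} {G G' : SimpleGraph (Fin n)} (h : G ≤ G') :
    threeStarCount G ≤ threeStarCount G' :=
  Finset.sum_le_sum fun _ _ => Nat.choose_le_choose _ (SimpleGraph.degree_le_of_le h)

lemma processGraph_mono (n : ℕ) (σ : Fin (n.choose 2) ≃ {e : Sym2 (Fin n) // ¬ e.IsDiag})
    {s t : ℕ} (h : s ≤ t) : processGraph n σ s ≤ processGraph n σ t := by
  refine SimpleGraph.fromEdgeSet_mono ?_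
  rintro e ⟨k, hk, rfl⟩
  exact ⟨k, by omega, rfl⟩

/-! ### Reduction to a single time -/

/-- It suffices to look at one time `T` at which `G_T` is still locally sparse, but already
spans more than `i` copies of `K_{1,3}`: sparsity passes to all earlier times, and `t_{i+1}^* ≤ T`. -/
lemma process_property {n : ℕ} (hn : 5 ≤ n) (i T : ℕ)
    (σ : Fin (n.choose 2) ≃ {e : Sym2 (Fin n) // ¬ e.IsDiag})
    (h5 : ¬ HasDense (processGraph n σ T) 5 4) (h3 : ¬ HasDense (processGraph n σ T) 3 3)
    (hT : i + 1 ≤ threeStarCount (processGraph n σ T)) (t : ℕ)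
    (h1 : tStar n i (processGraph n σ) ≤ t) (h2 : t < tStar n (i + 1) (processGraph n σ)) :
    mu (processGraph n σ t) =
      degCount (processGraph n σ t) 0 + (degCount (processGraph n σ t) 1 + i + 1) / 2 := by
  have htT : t ≤ T := (h2.trans_le (Nat.sInf_le hT)).le
  have hle := processGraph_mono n σ htT
  have hlt : threeStarCount (processGraph n σ t) < i + 1 := by
    by_contra! h
    have : tStar n (i + 1) (processGraph n σ) ≤ t := Nat.sInf_le h
    omega
  have hge : i ≤ threeStarCount (processGraph n σ t) := by
    have hmem : tStar n i (processGraph n σ) ∈ {s | i ≤ threeStarCount (processGraph n σ s)} :=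
      Nat.sInf_mem ⟨T, by simp only [Set.mem_ofPred_eq]; omega⟩
    exact le_trans hmem (threeStarCount_mono (processGraph_mono n σ h1))
  have hi : threeStarCount (processGraph n σ t) = i := by omega
  have := mu_eq_of_sparse hn (fun h => h5 (h.mono hle)) (fun h => h3 (h.mono hle))
  rwa [hi] at this

end Sparse

/-! ### Moments in a uniformly random ordering -/

section Moments

variable {E : Type*} {N : ℕ}

lemma choose_card_inter [DecidableEq E] (B I : Finset E) (k : ℕ) :
    ((B ∩ I).card.choose k : ℝ) = ∑ Q ∈ B.powersetCard k, if Q ⊆ I then (1 : ℝ) else 0 := by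
  rw [Finset.sum_boole, ← Finset.card_powersetCard]
  congr 2
  ext Q
  simp only [Finset.mem_powersetCard, Finset.mem_filter, Finset.subset_inter_iff]
  tauto

variable [Fintype E]

/-- The set of the first `T` elements in the ordering `σ`. -/
noncomputable def initial (T : ℕ) (σ : Fin N ≃ E) : Finset E :=
  Finset.univ.filter fun e => (σ.symm e : ℕ) < T

/-- The probability `(T)_m / (N)_m` that `m` given elements are among the first `T` of `N`. -/
noncomputable def inclProb (N T m : ℕ) : ℝ := (T.descFactorial m : ℝ) / N.descFactorial m

lemma inclProb_eq_choose (N T m : ℕ) : inclProb N T m = (T.choose m : ℝ) / N.choose m := by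
  rw [inclProb, Nat.descFactorial_eq_factorial_mul_choose,
    Nat.descFactorial_eq_factorial_mul_choose]
  push_cast
  exact mul_div_mul_left _ _ (by positivity)

lemma inclProb_nonneg (N T m : ℕ) : 0 ≤ inclProb N T m := by unfold inclProb; positivity

lemma inclProb_succ (N T m : ℕ) :
    inclProb N T (m + 1) = inclProb N T m * (((T - m : ℕ) : ℝ) / ((N - m : ℕ) : ℝ)) := by
  simp only [inclProb, Nat.descFactorial_succ]
  push_cast
  rw [mul_comm ((T - m : ℕ) : ℝ), mul_comm ((N - m : ℕ) : ℝ), mul_div_mul_comm]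

lemma ratio_antitone {N T : ℕ} (h : T ≤ N) :
    Antitone fun m : ℕ => ((T - m : ℕ) : ℝ) / ((N - m : ℕ) : ℝ) := by
  refine antitone_nat_of_succ_le fun m => ?_
  rcases Nat.lt_or_ge (m + 1) T with hm | hm
  · obtain ⟨a, rfl⟩ := Nat.exists_eq_add_of_lt hm
    obtain ⟨c, rfl⟩ := Nat.exists_eq_add_of_le h
    rw [show m + 1 + a + 1 - (m + 1) = a + 1 by omega, show m + 1 + a + 1 - m = a + 2 by omega,
      show m + 1 + a + 1 + c - (m + 1) = a + c + 1 by omega,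
      show m + 1 + a + 1 + c - m = a + c + 2 by omega]
    rw [div_le_div_iff₀ (by positivity) (by positivity)]
    push_cast
    nlinarith [(Nat.cast_nonneg c : (0 : ℝ) ≤ c)]
  · rw [show T - (m + 1) = 0 by omega]
    simp only [Nat.cast_zero, zero_div]
    positivity

lemma inclProb_succ_le {N T : ℕ} (h : T ≤ N) (m : ℕ) :
    inclProb N T (m + 1) ≤ inclProb N T m * ((T : ℝ) / N) := by
  rw [inclProb_succ]
  exact mul_le_mul_of_nonneg_left (by simpa using ratio_antitone h (Nat.zero_le m))
    (inclProb_nonneg _ _ _)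

lemma inclProb_le {N T : ℕ} (h : T ≤ N) (m : ℕ) : inclProb N T m ≤ ((T : ℝ) / N) ^ m := by
  induction m with
  | zero => simp [inclProb]
  | succ m ih =>
    rw [pow_succ]
    exact (inclProb_succ_le h m).trans (mul_le_mul_of_nonneg_right ih (by positivity))

/-- Two disjoint triples are negatively correlated. -/
lemma inclProb_six_le {N T : ℕ} (h : T ≤ N) : inclProb N T 6 ≤ inclProb N T 3 ^ 2 := by
  have h0 : inclProb N T 0 = 1 := by simp [inclProb]
  have hr := ratio_antitone h
  have e6 : inclProb N T 6 = inclProb N T 3 * ((((T - 3 : ℕ) : ℝ) / ((N - 3 : ℕ) : ℝ)) *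
    (((T - 4 : ℕ) : ℝ) / ((N - 4 : ℕ) : ℝ)) * (((T - 5 : ℕ) : ℝ) / ((N - 5 : ℕ) : ℝ))) := by
    rw [inclProb_succ, inclProb_succ, inclProb_succ]; ring
  have e3 : inclProb N T 3 = ((((T - 0 : ℕ) : ℝ) / ((N - 0 : ℕ) : ℝ)) *
    (((T - 1 : ℕ) : ℝ) / ((N - 1 : ℕ) : ℝ)) * (((T - 2 : ℕ) : ℝ) / ((N - 2 : ℕ) : ℝ))) := by
    rw [inclProb_succ, inclProb_succ, inclProb_succ, h0]; ring
  rw [e6, sq]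
  refine mul_le_mul_of_nonneg_left ?_ (inclProb_nonneg _ _ _)
  rw [e3]
  have h1 := hr (show 0 ≤ 3 by omega)
  have h2 := hr (show 1 ≤ 4 by omega)
  have h3 := hr (show 2 ≤ 5 by omega)
  simp only at h1 h2 h3
  gcongr

lemma card_initial {T : ℕ} (hT : T ≤ N) (σ : Fin N ≃ E) :
    (initial T σ).card = T := by
  have : initial T σ = (Finset.univ.filter fun k : Fin N => (k : ℕ) < T).map σ.toEmbedding := by
    ext e
    simp only [initial, Finset.mem_filter, Finset.mem_univ, true_and, Finset.mem_map_equiv]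
  rw [this, Finset.card_map, Fin.card_filter_val_lt]
  omega

variable [DecidableEq E]

/-- All `m`-sets are contained in the initial segment for equally many orderings, so this
number is found by double counting. -/
lemma sum_subset_initial (hE : Fintype.card E = N) {T : ℕ} (hT : T ≤ N) (Q : Finset E) :
    ∑ σ : Fin N ≃ E, (if Q ⊆ initial T σ then (1 : ℝ) else 0) =
      Fintype.card (Fin N ≃ E) * inclProb N T Q.card := by
  have hsymm : ∀ Q' ∈ Finset.powersetCard Q.card (Finset.univ : Finset E),
      ∑ σ : Fin N ≃ E, (if Q' ⊆ initial T σ then (1 : ℝ) else 0) =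
        ∑ σ : Fin N ≃ E, (if Q ⊆ initial T σ then (1 : ℝ) else 0) := by
    intro Q' hQ'
    obtain ⟨π, hπ⟩ : ∃ π : Equiv.Perm E, ∀ e, e ∈ Q' ↔ π e ∈ Q := by
      have hc : Fintype.card {e // e ∈ Q'} = Fintype.card {e // e ∈ Q} := by
        simpa using (Finset.mem_powersetCard.1 hQ').2
      let f : {e // e ∈ Q'} ≃ {e // e ∈ Q} := Fintype.equivOfCardEq hc
      refine ⟨f.extendSubtype, fun e => ⟨fun h => f.extendSubtype_mem e h, fun h => ?_⟩⟩
      by_contra h'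
      exact f.extendSubtype_not_mem e h' h
    refine Fintype.sum_equiv (Equiv.equivCongr (Equiv.refl _) π) _ _ fun σ => ?_
    have : Q' ⊆ initial T σ ↔ Q ⊆ initial T (Equiv.equivCongr (Equiv.refl _) π σ) := by
      simp only [Finset.subset_iff, initial, Finset.mem_filter, Finset.mem_univ, true_and]
      rw [π.forall_congr_left]
      simp [hπ]
    simp only [this]
  have hdouble : ∑ Q' ∈ Finset.powersetCard Q.card (Finset.univ : Finset E),
      ∑ σ : Fin N ≃ E, (if Q' ⊆ initial T σ then (1 : ℝ) else 0) =
      Fintype.card (Fin N ≃ E) * (T.choose Q.card : ℝ) := by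
    rw [Finset.sum_comm]
    rw [Finset.sum_congr rfl (g := fun _ => (T.choose Q.card : ℝ))]
    · simp
    · intro σ _
      rw [Finset.sum_boole]
      congr 1
      have : (Finset.powersetCard Q.card (Finset.univ : Finset E)).filter
          (fun Q' => Q' ⊆ initial T σ) = Finset.powersetCard Q.card (initial T σ) := by
        ext Q'; simp [Finset.mem_powersetCard, and_comm]
      rw [this, Finset.card_powersetCard, card_initial hT]
  rw [Finset.sum_congr rfl hsymm, Finset.sum_const, Finset.card_powersetCard, Finset.card_univ,
    hE, nsmul_eq_mul] at hdouble
  have hpos : (0 : ℝ) < N.choose Q.card := by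
    exact_mod_cast Nat.choose_pos (hE ▸ Finset.card_le_univ Q)
  rw [inclProb_eq_choose, ← mul_div_assoc, eq_div_iff hpos.ne', ← hdouble, mul_comm]

lemma sum_choose (hE : Fintype.card E = N) {T : ℕ} (hT : T ≤ N) (B : Finset E) (k : ℕ) :
    ∑ σ : Fin N ≃ E, ((B ∩ initial T σ).card.choose k : ℝ) =
      Fintype.card (Fin N ≃ E) * (B.card.choose k * inclProb N T k) := by
  simp only [choose_card_inter]
  rw [Finset.sum_comm, Finset.sum_congr rfl
    (g := fun _ => Fintype.card (Fin N ≃ E) * inclProb N T k)]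
  · rw [Finset.sum_const, Finset.card_powersetCard, nsmul_eq_mul]; ring
  · intro Q hQ
    rw [sum_subset_initial hE hT, (Finset.mem_powersetCard.1 hQ).2]

lemma sum_choose_mul_choose (hE : Fintype.card E = N) {T : ℕ} (hT : T ≤ N) (B B' : Finset E)
    (hB : Disjoint B B') :
    ∑ σ : Fin N ≃ E, ((B ∩ initial T σ).card.choose 3 : ℝ) * (B' ∩ initial T σ).card.choose 3 =
      Fintype.card (Fin N ≃ E) * (B.card.choose 3 * B'.card.choose 3 * inclProb N T 6) := by
  simp only [choose_card_inter, Finset.sum_mul_sum]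
  rw [Finset.sum_comm, Finset.sum_congr rfl
    (g := fun _ => Fintype.card (Fin N ≃ E) * (B'.card.choose 3 * inclProb N T 6))]
  · rw [Finset.sum_const, Finset.card_powersetCard, nsmul_eq_mul]; ring
  · intro Q hQ
    rw [Finset.sum_comm, Finset.sum_congr rfl
      (g := fun _ => Fintype.card (Fin N ≃ E) * inclProb N T 6)]
    · rw [Finset.sum_const, Finset.card_powersetCard, nsmul_eq_mul]; ring
    · intro Q' hQ'
      rw [Finset.mem_powersetCard] at hQ hQ'
      have hd : Disjoint Q Q' := hB.mono hQ.1 hQ'.1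
      have hc : (Q ∪ Q').card = 6 := by
        rw [Finset.card_union_of_disjoint hd, hQ.2, hQ'.2]
      rw [← hc, ← sum_subset_initial hE hT]
      refine Finset.sum_congr rfl fun σ _ => ?_
      simp only [Finset.union_subset_iff, ite_and, mul_ite, mul_one, mul_zero]
      split_ifs <;> rfl

/-- The square of `d.choose 3` in the binomial basis. -/
lemma choose_sq (d : ℕ) : (d.choose 3 : ℝ) * d.choose 3 =
    d.choose 3 + 12 * d.choose 4 + 30 * d.choose 5 + 20 * d.choose 6 := by
  have h : ∀ k : ℕ, (d.choose k : ℝ) = (descPochhammer ℝ k).eval (d : ℝ) / k.factorial := by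
    intro k
    rw [descPochhammer_eval_eq_descFactorial, Nat.descFactorial_eq_factorial_mul_choose]
    push_cast
    field_simp
  simp only [h, descPochhammer_succ_eval, descPochhammer_zero, Polynomial.eval_one,
    Nat.factorial]
  push_cast
  ring

lemma choose_mul_inclProb_le {T : ℕ} (hT : T ≤ N) {b : ℕ} (hb : b * T ≤ N) (k : ℕ) :
    (b.choose (k + 1) : ℝ) * inclProb N T (k + 1) ≤ b.choose k * inclProb N T k := by
  have h1 : (b.choose (k + 1) : ℝ) ≤ b.choose k * b := by
    have := Nat.choose_succ_right_eq b k
    have h2 : b.choose (k + 1) ≤ b.choose k * b :=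
      calc b.choose (k + 1) ≤ b.choose (k + 1) * (k + 1) := Nat.le_mul_of_pos_right _ (by omega)
        _ = b.choose k * (b - k) := this
        _ ≤ _ := Nat.mul_le_mul_left _ (by omega)
    exact_mod_cast h2
  have h3 : (b : ℝ) * (T / N) ≤ 1 := by
    rw [← mul_div_assoc]
    exact div_le_one_of_le₀ (by exact_mod_cast hb) (by positivity)
  have h4 := inclProb_nonneg N T k
  calc (b.choose (k + 1) : ℝ) * inclProb N T (k + 1)
      ≤ (b.choose k * b) * (inclProb N T k * (T / N)) :=
        mul_le_mul h1 (inclProb_succ_le hT k) (inclProb_nonneg _ _ _) (by positivity)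
    _ = (b.choose k * inclProb N T k) * (b * (T / N)) := by ring
    _ ≤ _ := mul_le_of_le_one_right (by positivity) h3

/-- The factor `63 = 1 + 12 + 30 + 20` is the coefficient sum in `choose_sq`; when `b T ≤ N` the
expectations of `d.choose k` decrease in `k`. -/
lemma sum_choose_sq_le (hE : Fintype.card E = N) {T : ℕ} (hT : T ≤ N) (B : Finset E)
    (hb : B.card * T ≤ N) :
    ∑ σ : Fin N ≃ E, ((B ∩ initial T σ).card.choose 3 : ℝ) * (B ∩ initial T σ).card.choose 3 ≤
      Fintype.card (Fin N ≃ E) * (63 * (B.card.choose 3 * inclProb N T 3)) := by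
  simp only [choose_sq, Finset.sum_add_distrib, ← Finset.mul_sum, sum_choose hE hT]
  have h3 := choose_mul_inclProb_le hT hb 3
  have h4 := choose_mul_inclProb_le hT hb 4
  have h5 := choose_mul_inclProb_le hT hb 5
  have hW : (0 : ℝ) ≤ Fintype.card (Fin N ≃ E) := by positivity
  simp only [Nat.reduceAdd] at h3 h4 h5
  calc _ = Fintype.card (Fin N ≃ E) * (B.card.choose 3 * inclProb N T 3 +
        12 * (B.card.choose 4 * inclProb N T 4) + 30 * (B.card.choose 5 * inclProb N T 5) +
        20 * (B.card.choose 6 * inclProb N T 6)) := by ring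
    _ ≤ _ := mul_le_mul_of_nonneg_left (by linarith) hW

/-- Second moment method for `X = ∑ v ∈ A, (d_v choose 3)`, where `d_v` counts the elements of the
block `B v` among the first `T`. Distinct blocks are negatively correlated and the variance within
a block is at most `63` times the mean, so Chebyshev's inequality applies with variance
at most `63 M`, `M` being the mean of `X`. -/
lemma second_moment {α : Type*} (hE : Fintype.card E = N) {T : ℕ} (hT : T ≤ N)
    (A : Finset α) (B : α → Finset E) (b : ℕ) (hB : ∀ v ∈ A, (B v).card = b)
    (hdisj : ∀ u ∈ A, ∀ v ∈ A, u ≠ v → Disjoint (B u) (B v)) (hb : b * T ≤ N)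
    (M : ℝ) (hM : M = A.card * (b.choose 3 * inclProb N T 3)) (hM0 : 0 < M) :
    ∑ σ : Fin N ≃ E,
      (if (∑ v ∈ A, ((B v ∩ initial T σ).card.choose 3 : ℝ)) < M / 2 then (1 : ℝ) else 0) ≤
      Fintype.card (Fin N ≃ E) * (252 / M) := by
  set W : ℝ := (Fintype.card (Fin N ≃ E) : ℝ) with hW
  have hW0 : 0 ≤ W := by positivity
  set X : (Fin N ≃ E) → ℝ := fun σ => ∑ v ∈ A, ((B v ∩ initial T σ).card.choose 3 : ℝ) with hX
  set c : ℝ := b.choose 3 * inclProb N T 3 with hc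
  have hc0 : 0 ≤ c := mul_nonneg (by positivity) (inclProb_nonneg _ _ _)
  have h1 : ∑ σ, X σ = W * M := by
    rw [hX, Finset.sum_comm, Finset.sum_congr rfl (g := fun _ => W * c)]
    · rw [Finset.sum_const, nsmul_eq_mul, hM]; ring
    · intro v hv
      rw [sum_choose hE hT, hB v hv]
  have h2 : ∑ σ, X σ ^ 2 ≤ W * (M ^ 2 + 63 * M) := by
    have e1 : ∑ σ, X σ ^ 2 = ∑ u ∈ A, ∑ v ∈ A, ∑ σ : Fin N ≃ E,
        ((B u ∩ initial T σ).card.choose 3 : ℝ) * (B v ∩ initial T σ).card.choose 3 := by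
      simp only [hX, sq, Finset.sum_mul_sum]
      rw [Finset.sum_comm]
      exact Finset.sum_congr rfl fun u _ => Finset.sum_comm
    have e2 : W * (M ^ 2 + 63 * M) =
        ∑ u ∈ A, ∑ v ∈ A, (W * c ^ 2 + if u = v then W * (63 * c) else 0) := by
      simp only [Finset.sum_add_distrib, Finset.sum_ite_eq, Finset.sum_const, nsmul_eq_mul]
      rw [Finset.sum_congr rfl (g := fun _ => W * (63 * c)) fun u hu => by simp [hu]]
      rw [Finset.sum_const, nsmul_eq_mul, hM]
      ring
    rw [e1, e2]
    refine Finset.sum_le_sum fun u hu => Finset.sum_le_sum fun v hv => ?_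
    by_cases huv : u = v
    · subst huv
      have := sum_choose_sq_le hE hT (B u) (by rw [hB u hu]; exact hb)
      rw [hB u hu] at this
      rw [if_pos rfl]
      exact this.trans (le_add_of_nonneg_left (by positivity))
    · rw [if_neg huv, add_zero, sum_choose_mul_choose hE hT _ _ (hdisj u hu v hv huv),
        hB u hu, hB v hv]
      refine mul_le_mul_of_nonneg_left ?_ hW0
      rw [hc, mul_pow, ← sq]
      exact mul_le_mul_of_nonneg_left (inclProb_six_le hT) (by positivity)
  have h3 : ∑ σ, (X σ - M) ^ 2 ≤ W * (63 * M) := by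
    have : ∑ σ, (X σ - M) ^ 2 = ∑ σ, X σ ^ 2 - 2 * M * ∑ σ, X σ + W * M ^ 2 := by
      simp only [sub_sq, Finset.sum_add_distrib, Finset.sum_sub_distrib, Finset.sum_const,
        Finset.card_univ, nsmul_eq_mul, Finset.mul_sum]
      congr 2
      exact Finset.sum_congr rfl fun σ _ => by ring
    rw [this, h1]
    linarith
  have h4 : ∑ σ, (if X σ < M / 2 then (1 : ℝ) else 0) ≤
      ∑ σ, (X σ - M) ^ 2 * (4 / M ^ 2) := by
    refine Finset.sum_le_sum fun σ _ => ?_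
    split_ifs with h
    · rw [← mul_div_assoc, le_div_iff₀ (by positivity)]
      nlinarith
    · positivity
  rw [← Finset.sum_mul] at h4
  refine h4.trans ((mul_le_mul_of_nonneg_right h3 (by positivity)).trans (le_of_eq ?_))
  field_simp
  ring

end Moments

/-! ### Dense spots and stars in the random graph process -/

section Links

/-- The potential edges on `n` vertices. -/
abbrev Pair (n : ℕ) := {e : Sym2 (Fin n) // ¬ e.IsDiag}

lemma card_pair (n : ℕ) : Fintype.card (Pair n) = n.choose 2 := by
  rw [Sym2.card_subtype_not_diag, Fintype.card_fin]

lemma mem_edgeSet_iff_initial {n : ℕ} (σ : Fin (n.choose 2) ≃ Pair n) (T : ℕ) (e : Pair n) :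
    e.1 ∈ (processGraph n σ T).edgeSet ↔ e ∈ initial T σ := by
  simp only [processGraph, SimpleGraph.edgeSet_fromEdgeSet, Set.mem_sdiff, Set.mem_ofPred_eq,
    initial, Finset.mem_filter, Finset.mem_univ, true_and]
  constructor
  · rintro ⟨⟨k, hk, he⟩, -⟩
    have : σ k = e := Subtype.ext he
    rw [← this]
    simpa using hk
  · intro h
    exact ⟨⟨σ.symm e, h, by simp⟩, e.2⟩

/-- First moment bound for `k` vertices spanning `m` edges. There are at most `n ^ k` sets of `k`
vertices, and `(k + 1).choose 2`, the number of unordered pairs with loops, bounds the number of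
potential edges inside each. -/
lemma sum_hasDense_le {n T : ℕ} (hT : T ≤ n.choose 2) (k m : ℕ) :
    ∑ σ : Fin (n.choose 2) ≃ Pair n, (if HasDense (processGraph n σ T) k m then (1 : ℝ) else 0) ≤
      Fintype.card (Fin (n.choose 2) ≃ Pair n) *
        ((n : ℝ) ^ k * ((k + 1).choose 2).choose m * inclProb (n.choose 2) T m) := by
  set inside : Finset (Fin n) → Finset (Pair n) :=
    fun S => Finset.univ.filter fun e => e.1 ∈ S.sym2 with hinside
  have hcard : ∀ S : Finset (Fin n), (inside S).card ≤ (S.card + 1).choose 2 := by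
    intro S
    rw [← Finset.card_sym2, ← Finset.card_map (Function.Embedding.subtype _)]
    refine Finset.card_le_card fun e he => ?_
    simp only [hinside, Finset.mem_map, Finset.mem_filter] at he
    obtain ⟨e', ⟨-, he'⟩, rfl⟩ := he
    exact he'
  have hbound : ∀ σ : Fin (n.choose 2) ≃ Pair n,
      (if HasDense (processGraph n σ T) k m then (1 : ℝ) else 0) ≤
      ∑ S ∈ Finset.powersetCard k (Finset.univ : Finset (Fin n)),
        ∑ Q ∈ Finset.powersetCard m (inside S), if Q ⊆ initial T σ then (1 : ℝ) else 0 := by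
    intro σ
    have hnn : ∀ S : Finset (Fin n), 0 ≤ ∑ Q ∈ Finset.powersetCard m (inside S),
        if Q ⊆ initial T σ then (1 : ℝ) else 0 := fun S =>
      Finset.sum_nonneg fun Q _ => by positivity
    split_ifs with h
    · obtain ⟨S, Q, hS, hm, hQ, hQS⟩ := h
      set Q' : Finset (Pair n) := Finset.univ.filter fun e => e.1 ∈ Q with hQ'
      have hmap : Q'.map (Function.Embedding.subtype _) = Q := by
        ext e
        simp only [hQ', Finset.mem_map, Finset.mem_filter, Finset.mem_univ, true_and,
          Function.Embedding.subtype_apply]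
        refine ⟨by rintro ⟨e', h, rfl⟩; exact h, fun he => ⟨⟨e, ?_⟩, he, rfl⟩⟩
        exact SimpleGraph.not_isDiag_of_mem_edgeSet _ (SimpleGraph.mem_edgeFinset.1 (hQ he))
      have h1 : S ∈ Finset.powersetCard k (Finset.univ : Finset (Fin n)) := by
        simp [Finset.mem_powersetCard, hS]
      have h2 : Q' ∈ Finset.powersetCard m (inside S) := by
        rw [Finset.mem_powersetCard]
        refine ⟨fun e he => ?_, by rw [← hm, ← hmap, Finset.card_map]⟩
        simp only [hQ', hinside, Finset.mem_filter, Finset.mem_univ, true_and] at he ⊢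
        exact hQS he
      have h3 : Q' ⊆ initial T σ := fun e he => by
        rw [← mem_edgeSet_iff_initial, ← SimpleGraph.mem_edgeFinset]
        exact hQ (by simpa [hQ'] using he)
      refine le_trans ?_ (Finset.single_le_sum (fun S _ => hnn S) h1)
      refine le_trans ?_ (Finset.single_le_sum (fun Q _ => by positivity) h2)
      rw [if_pos h3]
    · exact Finset.sum_nonneg fun S _ => hnn S
  refine (Finset.sum_le_sum fun σ _ => hbound σ).trans ?_
  rw [Finset.sum_comm]
  set W : ℝ := (Fintype.card (Fin (n.choose 2) ≃ Pair n) : ℝ) with hW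
  have hP := inclProb_nonneg (n.choose 2) T m
  have hW0 : 0 ≤ W := by positivity
  calc _ ≤ ∑ S ∈ Finset.powersetCard k (Finset.univ : Finset (Fin n)),
        (((k + 1).choose 2).choose m : ℝ) * (W * inclProb (n.choose 2) T m) := by
        refine Finset.sum_le_sum fun S hS => ?_
        rw [Finset.sum_comm, Finset.sum_congr rfl (g := fun _ => W * inclProb (n.choose 2) T m)]
        · rw [Finset.sum_const, Finset.card_powersetCard, nsmul_eq_mul]
          refine mul_le_mul_of_nonneg_right ?_ (by positivity)
          have := hcard S
          rw [(Finset.mem_powersetCard.1 hS).2] at this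
          exact_mod_cast Nat.choose_le_choose m this
        · intro Q hQ
          rw [sum_subset_initial (card_pair n) hT, (Finset.mem_powersetCard.1 hQ).2]
    _ = (n.choose k : ℝ) *
        ((((k + 1).choose 2).choose m : ℝ) * (W * inclProb (n.choose 2) T m)) := by
        rw [Finset.sum_const, Finset.card_powersetCard, Finset.card_univ, Fintype.card_fin,
          nsmul_eq_mul]
    _ ≤ (n : ℝ) ^ k *
        ((((k + 1).choose 2).choose m : ℝ) * (W * inclProb (n.choose 2) T m)) := by
        refine mul_le_mul_of_nonneg_right ?_ (by positivity)
        exact_mod_cast Nat.choose_le_pow n k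
    _ = _ := by ring

/-- The pairs joining `v` to a vertex `w` of the upper half, `⌊n/2⌋ ≤ w`, of `{0, …, n-1}`. For
different `v` in the lower half these sets are disjoint, which keeps the star counts at different
centres negatively correlated. -/
noncomputable def upperStar {n : ℕ} (v : Fin n) : Finset (Pair n) :=
  Finset.univ.filter fun e => ∃ w : Fin n, n / 2 ≤ w.val ∧ e.1 = s(v, w)

/-- The lower half `{0, …, ⌊n/2⌋ - 1}` of `{0, …, n-1}`. -/
def lowerHalf (n : ℕ) : Finset (Fin n) := Finset.univ.filter fun v => v.val < n / 2

lemma card_lowerHalf (n : ℕ) : (lowerHalf n).card = n / 2 := by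
  rw [lowerHalf, Fin.card_filter_val_lt]; omega

lemma card_upperStar {n : ℕ} {v : Fin n} (hv : v ∈ lowerHalf n) :
    (upperStar v).card = n - n / 2 := by
  simp only [lowerHalf, Finset.mem_filter, Finset.mem_univ, true_and] at hv
  have hU : (Finset.univ.filter fun w : Fin n => n / 2 ≤ w.val).card = n - n / 2 := by
    have h1 := Finset.card_filter_add_card_filter_not (s := (Finset.univ : Finset (Fin n)))
      (fun w => w.val < n / 2)
    have h2 := card_lowerHalf n
    rw [lowerHalf] at h2
    rw [h2, Finset.card_univ, Fintype.card_fin] at h1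
    simp only [not_lt] at h1
    omega
  rw [← hU, ← image_star_card v, ← Finset.card_map (Function.Embedding.subtype _)]
  congr 1
  ext e
  simp only [upperStar, Finset.mem_map, Finset.mem_filter, Finset.mem_univ, true_and,
    Function.Embedding.subtype_apply, Finset.mem_image]
  constructor
  · rintro ⟨e, ⟨w, hw, h⟩, rfl⟩
    exact ⟨w, hw, h.symm⟩
  · rintro ⟨w, hw, rfl⟩
    refine ⟨⟨s(v, w), ?_⟩, ⟨w, hw, rfl⟩, rfl⟩
    rw [Sym2.mk_isDiag_iff]
    rintro rfl
    omega

lemma disjoint_upperStar {n : ℕ} {u v : Fin n} (hu : u ∈ lowerHalf n)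
    (huv : u ≠ v) : Disjoint (upperStar u) (upperStar v) := by
  simp only [lowerHalf, Finset.mem_filter, Finset.mem_univ, true_and] at hu
  rw [Finset.disjoint_left]
  intro e he he'
  simp only [upperStar, Finset.mem_filter, Finset.mem_univ, true_and] at he he'
  obtain ⟨w, hw, h⟩ := he
  obtain ⟨w', hw', h'⟩ := he'
  rw [h, Sym2.eq_iff] at h'
  rcases h' with ⟨h, -⟩ | ⟨h, -⟩
  · exact huv h
  · subst h; omega

lemma card_upperStar_inter_le {n : ℕ} (σ : Fin (n.choose 2) ≃ Pair n) (T : ℕ) (v : Fin n) :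
    (upperStar v ∩ initial T σ).card ≤ (processGraph n σ T).degree v := by
  rw [← SimpleGraph.card_incidenceFinset_eq_degree,
    ← Finset.card_map (Function.Embedding.subtype _)]
  refine Finset.card_le_card fun e he => ?_
  simp only [Finset.mem_map, Finset.mem_inter, Function.Embedding.subtype_apply] at he
  obtain ⟨e, ⟨h1, h2⟩, rfl⟩ := he
  rw [SimpleGraph.mem_incidenceFinset]
  refine ⟨(mem_edgeSet_iff_initial σ T e).2 h2, ?_⟩
  simp only [upperStar, Finset.mem_filter, Finset.mem_univ, true_and] at h1
  obtain ⟨w, -, h⟩ := h1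
  rw [h]
  exact Sym2.mem_mk_left v w

lemma sum_upperStar_le {n : ℕ} (σ : Fin (n.choose 2) ≃ Pair n) (T : ℕ) :
    ∑ v ∈ lowerHalf n, ((upperStar v ∩ initial T σ).card.choose 3 : ℝ) ≤
      threeStarCount (processGraph n σ T) := by
  rw [threeStarCount]
  push_cast
  refine (Finset.sum_le_sum (g := fun v => (((processGraph n σ T).degree v).choose 3 : ℝ))
    fun v _ => ?_).trans
    (Finset.sum_le_sum_of_subset_of_nonneg (Finset.subset_univ _) fun _ _ _ => by positivity)
  exact_mod_cast Nat.choose_le_choose 3 (card_upperStar_inter_le σ T v)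

end Links

/-! ### Asymptotics -/

section Asymptotics

lemma cube_le_choose {d : ℕ} (hd : 4 ≤ d) : ((d : ℝ) / 2) ^ 3 / 6 ≤ (d.choose 3 : ℝ) := by
  have h := Nat.pow_sub_le_descFactorial d 3
  rw [Nat.descFactorial_eq_factorial_mul_choose] at h
  have h' : ((d + 1 - 3 : ℕ) : ℝ) ^ 3 ≤ 6 * d.choose 3 := by exact_mod_cast h
  have h2 : (d : ℝ) / 2 ≤ ((d + 1 - 3 : ℕ) : ℝ) := by
    have : d ≤ 2 * (d + 1 - 3) := by omega
    have : (d : ℝ) ≤ 2 * ((d + 1 - 3 : ℕ) : ℝ) := by exact_mod_cast this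
    linarith
  have h3 := pow_le_pow_left₀ (by positivity) h2 3
  linarith

lemma le_inclProb_three {N T : ℕ} (hT : 4 ≤ T) (hTN : T ≤ N) :
    ((T : ℝ) / (2 * N)) ^ 3 ≤ inclProb N T 3 := by
  have h1 := cube_le_choose hT
  have h2 : (N.choose 3 : ℝ) ≤ (N : ℝ) ^ 3 / 6 := by
    have := Nat.choose_le_pow_div (α := ℝ) 3 N
    simpa [Nat.factorial] using this
  have hpos : (0 : ℝ) < N.choose 3 := by exact_mod_cast Nat.choose_pos (by omega)
  have hN : (0 : ℝ) < N := by exact_mod_cast (by omega : 0 < N)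
  rw [inclProb_eq_choose, le_div_iff₀ hpos]
  calc ((T : ℝ) / (2 * N)) ^ 3 * N.choose 3 ≤ ((T : ℝ) / (2 * N)) ^ 3 * ((N : ℝ) ^ 3 / 6) :=
        mul_le_mul_of_nonneg_left h2 (by positivity)
    _ = ((T : ℝ) / 2) ^ 3 / 6 := by field_simp
    _ ≤ _ := h1

lemma processProb_le_one (n : ℕ) (P : (ℕ → SimpleGraph (Fin n)) → Prop) :
    processProb n P ≤ 1 := by
  unfold processProb
  refine div_le_one_of_le₀ ?_ (by positivity)
  calc _ ≤ ∑ _σ : Fin (n.choose 2) ≃ Pair n, (1 : ℝ) :=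
        Finset.sum_le_sum fun σ _ => by split_ifs <;> norm_num
    _ = _ := by simp

lemma card_order_pos (n : ℕ) : 0 < Fintype.card (Fin (n.choose 2) ≃ Pair n) :=
  Fintype.card_pos_iff.2 ⟨Fintype.equivOfCardEq (by rw [card_pair, Fintype.card_fin])⟩

/-- Union bound over the three ways in which time `T` can fail `process_property`: five vertices
spanning four edges, a triangle, or too few stars. -/
lemma le_processProb {n T i : ℕ} (hn : 5 ≤ n) (hT : T ≤ n.choose 2)
    (hb : (n - n / 2) * T ≤ n.choose 2) (M : ℝ)
    (hM : M = (n / 2 : ℕ) * ((n - n / 2).choose 3 * inclProb (n.choose 2) T 3)) (hM0 : 0 < M)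
    (hMi : (i : ℝ) + 1 ≤ M / 2) :
    1 - ((n : ℝ) ^ 5 * 1365 * inclProb (n.choose 2) T 4 +
        (n : ℝ) ^ 3 * 20 * inclProb (n.choose 2) T 3 + 252 / M) ≤
      processProb n (fun Gs =>
        ∀ t : ℕ, tStar n i Gs ≤ t → t < tStar n (i + 1) Gs →
          mu (Gs t) = degCount (Gs t) 0 + (degCount (Gs t) 1 + i + 1) / 2) := by
  have hW : (0 : ℝ) < Fintype.card (Fin (n.choose 2) ≃ Pair n) := by
    exact_mod_cast card_order_pos n
  have h5 := sum_hasDense_le hT 5 4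
  have h3 := sum_hasDense_le hT 3 3
  have hstar := second_moment (card_pair n) hT (lowerHalf n) upperStar (n - n / 2)
    (fun v hv => card_upperStar hv) (fun u hu v _ huv => disjoint_upperStar hu huv) hb M
    (by rw [hM, card_lowerHalf]) hM0
  have e1 : ((5 + 1).choose 2).choose 4 = 1365 := by decide
  have e2 : ((3 + 1).choose 2).choose 3 = 20 := by decide
  rw [e1] at h5
  rw [e2] at h3
  push_cast at h5 h3
  -- Hiding the form of the property keeps the decidability instance of `processProb`.
  obtain ⟨P, hPdef⟩ : ∃ P : (ℕ → SimpleGraph (Fin n)) → Prop, P = fun Gs =>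
    ∀ t : ℕ, tStar n i Gs ≤ t → t < tStar n (i + 1) Gs →
      mu (Gs t) = degCount (Gs t) 0 + (degCount (Gs t) 1 + i + 1) / 2 := ⟨_, rfl⟩
  rw [← hPdef]
  unfold processProb
  rw [le_div_iff₀ hW]
  have hpoint : ∀ σ : Fin (n.choose 2) ≃ Pair n,
      (1 : ℝ) - (if HasDense (processGraph n σ T) 5 4 then (1 : ℝ) else 0) -
        (if HasDense (processGraph n σ T) 3 3 then (1 : ℝ) else 0) -
        (if (∑ v ∈ lowerHalf n, ((upperStar v ∩ initial T σ).card.choose 3 : ℝ)) < M / 2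
          then (1 : ℝ) else 0) ≤
      if P (processGraph n σ) then (1 : ℝ) else 0 := by
    intro σ
    by_cases c5 : HasDense (processGraph n σ T) 5 4
    · rw [if_pos c5]
      split_ifs <;> norm_num
    by_cases c3 : HasDense (processGraph n σ T) 3 3
    · rw [if_pos c3]
      split_ifs <;> norm_num
    by_cases cs : (∑ v ∈ lowerHalf n, ((upperStar v ∩ initial T σ).card.choose 3 : ℝ)) < M / 2
    · rw [if_pos cs]
      split_ifs <;> norm_num
    have hi : i + 1 ≤ threeStarCount (processGraph n σ T) := by
      have := hMi.trans ((not_lt.1 cs).trans (sum_upperStar_le σ T))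
      exact_mod_cast this
    have hP : P (processGraph n σ) :=
      hPdef ▸ fun t h1 h2 => process_property hn i T σ c5 c3 hi t h1 h2
    rw [if_neg c5, if_neg c3, if_neg cs, if_pos hP]
    norm_num
  refine le_trans ?_ (Finset.sum_le_sum fun σ _ => hpoint σ)
  simp only [Finset.sum_sub_distrib, Finset.sum_const, Finset.card_univ, nsmul_eq_mul, mul_one]
  linarith

/-- With `n` of order `s ^ 10` and `T = s ^ 7`, all three failure probabilities are `O(1 / s)`. The
mean number of stars found by `second_moment` is at least `s / (1536 * 2 ^ 20)`, which gives
`3221225472 = 2 * 1536 * 2 ^ 20` and `405874760192 = 349440 + 1280 + 252 * 1536 * 2 ^ 20`. -/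
lemma le_processProb_of_pow {n s i : ℕ} (hs : 2 ≤ s) (h1 : s ^ 10 ≤ n) (h2 : n ≤ 1024 * s ^ 10)
    (hi : 3221225472 * (i + 1) ≤ s) :
    1 - 405874760192 / (s : ℝ) ≤
      processProb n (fun Gs =>
        ∀ t : ℕ, tStar n i Gs ≤ t → t < tStar n (i + 1) Gs →
          mu (Gs t) = degCount (Gs t) 0 + (degCount (Gs t) 1 + i + 1) / 2) := by
  have hn : 1024 ≤ n := le_trans (by simpa using Nat.pow_le_pow_left hs 10) h1
  have hx0 : (0 : ℝ) < s := by exact_mod_cast (by omega : 0 < s)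
  have hx1 : (1 : ℝ) ≤ s := by exact_mod_cast (by omega : 1 ≤ s)
  have hy0 : (0 : ℝ) < n := by exact_mod_cast (by omega : 0 < n)
  have hy1 : (s : ℝ) ^ 10 ≤ n := by exact_mod_cast h1
  have hy2 : (n : ℝ) ≤ 1024 * (s : ℝ) ^ 10 := by exact_mod_cast h2
  have hN2 : 2 * n.choose 2 = n * (n - 1) := by
    rw [Nat.choose_two_right, Nat.mul_div_cancel' (Nat.even_mul_pred_self n).two_dvd]
  have hNlo : n * n ≤ 4 * n.choose 2 := by
    have : n * n ≤ 2 * (n * (n - 1)) := by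
      rw [Nat.mul_left_comm]
      exact Nat.mul_le_mul_left n (by omega)
    omega
  have hNhi : 2 * n.choose 2 ≤ n * n := hN2 ▸ Nat.mul_le_mul_left n (by omega)
  have hTn : 4 * s ^ 7 ≤ n := by
    refine le_trans ?_ h1
    calc 4 * s ^ 7 ≤ s ^ 3 * s ^ 7 := Nat.mul_le_mul_right _ (by nlinarith [Nat.pow_le_pow_left hs 3])
      _ = s ^ 10 := by ring
  have hb : (n - n / 2) * s ^ 7 ≤ n.choose 2 := by
    have : 4 * ((n - n / 2) * s ^ 7) ≤ n * n := by
      rw [Nat.mul_left_comm]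
      exact Nat.mul_le_mul (by omega) hTn
    omega
  have hT : s ^ 7 ≤ n.choose 2 := le_trans (Nat.le_mul_of_pos_left _ (by omega)) hb
  have hT4 : 4 ≤ s ^ 7 := by
    have := Nat.pow_le_pow_left hs 7
    omega
  set N := n.choose 2 with hN
  have hN0 : (0 : ℝ) < N := by exact_mod_cast (by omega : 0 < N)
  have hNlo' : (n : ℝ) ^ 2 / 4 ≤ N := by
    have : (n : ℝ) * n ≤ 4 * N := by exact_mod_cast hNlo
    linarith [sq (n : ℝ)]
  have hNhi' : 2 * (N : ℝ) ≤ (n : ℝ) ^ 2 := by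
    rw [sq]; exact_mod_cast hNhi
  have hratio : ((s ^ 7 : ℕ) : ℝ) / N ≤ 4 * (s : ℝ) ^ 7 / (n : ℝ) ^ 2 := by
    rw [div_le_div_iff₀ hN0 (by positivity)]
    push_cast
    nlinarith [pow_pos hx0 7]
  have hy3 : (s : ℝ) ^ 30 ≤ (n : ℝ) ^ 3 := by
    calc (s : ℝ) ^ 30 = (s ^ 10) ^ 3 := by ring
      _ ≤ _ := pow_le_pow_left₀ (by positivity) hy1 3
  -- `349440 = 1365 * 4 ^ 4`
  have b4 : (n : ℝ) ^ 5 * 1365 * inclProb N (s ^ 7) 4 ≤ 349440 / s := by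
    calc (n : ℝ) ^ 5 * 1365 * inclProb N (s ^ 7) 4
        ≤ (n : ℝ) ^ 5 * 1365 * (4 * (s : ℝ) ^ 7 / (n : ℝ) ^ 2) ^ 4 :=
          mul_le_mul_of_nonneg_left ((inclProb_le hT 4).trans
            (pow_le_pow_left₀ (by positivity) hratio 4)) (by positivity)
      _ = 349440 * (s : ℝ) ^ 28 / (n : ℝ) ^ 3 := by field_simp; norm_num
      _ ≤ 349440 * (s : ℝ) ^ 28 / (s : ℝ) ^ 30 := by gcongr
      _ = 349440 / s / s := by field_simp
      _ ≤ 349440 / s := div_le_self (by positivity) hx1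
  -- `1280 = 20 * 4 ^ 3`
  have b3 : (n : ℝ) ^ 3 * 20 * inclProb N (s ^ 7) 3 ≤ 1280 / s := by
    calc (n : ℝ) ^ 3 * 20 * inclProb N (s ^ 7) 3
        ≤ (n : ℝ) ^ 3 * 20 * (4 * (s : ℝ) ^ 7 / (n : ℝ) ^ 2) ^ 3 :=
          mul_le_mul_of_nonneg_left ((inclProb_le hT 3).trans
            (pow_le_pow_left₀ (by positivity) hratio 3)) (by positivity)
      _ = 1280 * (s : ℝ) ^ 21 / (n : ℝ) ^ 3 := by field_simp; norm_num
      _ ≤ 1280 * (s : ℝ) ^ 21 / (s : ℝ) ^ 30 := by gcongr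
      _ = 1280 / s / s ^ 8 := by field_simp
      _ ≤ 1280 / s := div_le_self (by positivity) (one_le_pow₀ hx1)
  set M : ℝ := (n / 2 : ℕ) * ((n - n / 2).choose 3 * inclProb N (s ^ 7) 3) with hM
  have hMlo : (s : ℝ) / 1610612736 ≤ M := by
    have m1 : (n : ℝ) / 4 ≤ (n / 2 : ℕ) := by
      have : n ≤ 4 * (n / 2) := by omega
      have : (n : ℝ) ≤ 4 * (n / 2 : ℕ) := by exact_mod_cast this
      linarith
    have m2 : (n : ℝ) ^ 3 / 384 ≤ (n - n / 2).choose 3 := by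
      refine le_trans ?_ (cube_le_choose (by omega))
      have : n ≤ 2 * (n - n / 2) := by omega
      have : (n : ℝ) ≤ 2 * (n - n / 2 : ℕ) := by exact_mod_cast this
      have := pow_le_pow_left₀ hy0.le this 3
      linarith
    have m3 : ((s : ℝ) ^ 7 / (n : ℝ) ^ 2) ^ 3 ≤ inclProb N (s ^ 7) 3 := by
      refine le_trans ?_ (le_inclProb_three hT4 hT)
      push_cast
      gcongr
    calc (s : ℝ) / 1610612736 = (s : ℝ) ^ 21 / (1536 * (1024 * (s : ℝ) ^ 10) ^ 2) := by
          field_simp; norm_num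
      _ ≤ (s : ℝ) ^ 21 / (1536 * (n : ℝ) ^ 2) := by gcongr
      _ = (n : ℝ) / 4 * ((n : ℝ) ^ 3 / 384 * ((s : ℝ) ^ 7 / (n : ℝ) ^ 2) ^ 3) := by
          field_simp; norm_num
      _ ≤ M := by
          rw [hM]
          gcongr
  have hM0 : 0 < M := lt_of_lt_of_le (by positivity) hMlo
  have hMi : (i : ℝ) + 1 ≤ M / 2 := by
    have : 3221225472 * ((i : ℝ) + 1) ≤ s := by exact_mod_cast hi
    linarith
  have bM : 252 / M ≤ 405874409472 / s := by
    calc 252 / M ≤ 252 / ((s : ℝ) / 1610612736) := by gcongr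
      _ = 405874409472 / s := by field_simp; norm_num
  refine le_trans ?_ (le_processProb (by omega) hT hb M hM hM0 hMi)
  have : 405874760192 / (s : ℝ) = 349440 / s + 1280 / s + 405874409472 / s := by
    rw [← add_div, ← add_div]; norm_num
  linarith

lemma tendsto_nthRoot : Tendsto (fun n : ℕ => Nat.nthRoot 10 n) atTop atTop := by
  refine tendsto_atTop.2 fun b => ?_
  filter_upwards [eventually_ge_atTop (b ^ 10)] with n hn
  exact (Nat.le_nthRoot_iff (by norm_num)).2 hn

end Asymptotics

/-- part (ii) of Theorem 2 of the paper. -/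
theorem statement_4 (i : ℕ) (hi : 0 < i) :
    Filter.Tendsto (fun n : ℕ =>
      processProb n (fun Gs =>
        ∀ t : ℕ, tStar n i Gs ≤ t → t < tStar n (i + 1) Gs →
          mu (Gs t) = degCount (Gs t) 0 + (degCount (Gs t) 1 + i + 1) / 2))
      Filter.atTop (nhds 1) := by
  have hroot : Tendsto (fun n : ℕ => ((Nat.nthRoot 10 n : ℕ) : ℝ)) atTop atTop :=
    tendsto_natCast_atTop_atTop.comp tendsto_nthRoot
  have hlow : Tendsto (fun n : ℕ => 1 - 405874760192 / ((Nat.nthRoot 10 n : ℕ) : ℝ)) atTop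
      (nhds 1) := by
    simpa using (hroot.const_div_atTop (405874760192 : ℝ)).const_sub 1
  refine tendsto_of_tendsto_of_tendsto_of_le_of_le' hlow tendsto_const_nhds ?_
    (Eventually.of_forall fun n => processProb_le_one n _)
  -- For `s = ⌊n ^ (1/10)⌋` one has `s ^ 10 ≤ n < (s + 1) ^ 10 ≤ 1024 * s ^ 10`.
  filter_upwards [tendsto_nthRoot.eventually_ge_atTop (3221225472 * (i + 1))] with n hn
  have hs : 2 ≤ Nat.nthRoot 10 n := by omega
  refine le_processProb_of_pow hs (Nat.pow_nthRoot_le (by norm_num)) ?_ hn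
  calc n ≤ (Nat.nthRoot 10 n + 1) ^ 10 := (Nat.lt_pow_nthRoot_add_one (by norm_num) n).le
    _ ≤ (2 * Nat.nthRoot 10 n) ^ 10 := Nat.pow_le_pow_left (by omega) 10
    _ = 1024 * Nat.nthRoot 10 n ^ 10 := by rw [mul_pow]; norm_num

end PaperMu
end

section
/- Let G be a finite simple graph and let T be a connected component of G^{AB} which is a tree and satisfies |A(T)| ≤ 3. Then a(T) = 2·n_0(T) + n_1(T) + s₃'(T). -/
/-!
Every vertex of `B(G)` has at least four neighbours in the core, and a vertex of `A(G)` has none.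
Hence every vertex of `T` of degree at most 2 lies in `A(T)`, and for `v ∈ A(T)` the edges of `G`
at `v` are exactly the edges of `T` at `v`. A cover contributes at least `2 - deg v` at each
`v ∈ A(T)`, which sums to `2 n₀ + n₁`. A 3-prespider has leaf set `A(T)`, and its centre is unique
since a tree has no 4-cycle; so there is at most one, and as a path passes at most two of the
leaves through the centre, it costs at least one further endpoint.

For the reverse inequality, fix demands `r ≤ 2` on `A(T)` and take an edge-minimal subgraph `P`
of `T` in which every `v ∈ A(T)` has degree at least `r v` (`exists_min_subgraph`). Around a vertex
`x` of degree at least 3 in `P`, minimality makes every neighbour tight, hence a vertex of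
`A(T)`; so `x` is adjacent to all of `A(T)` and `|A(T)| = 3`. There is at most one such `x` in a
tree, so deleting a single edge `xa` with `a ∈ A(T)` beforehand excludes this case. The deletion is
free if `deg a ≥ 3`; if no vertex of `A(T)` has degree 3 or more, then `x` and `A(T)` form a
3-prespider, which pays for the one endpoint lost.
-/
open Filter
open scoped Classical

namespace PaperMu

/-- `a(T)` for a connected component `T` of `G^{AB}`: the minimum number of endpoints in
`A(G) ∩ V(T)` of the paths of a disjoint path cover of `G^{AB}`, restricted to `T`
(a vertex forming a path of length 0 counts twice). -/
noncomputable def aComp {n : ℕ} (G : SimpleGraph (Fin n))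
    (c : (GAB G).ConnectedComponent) : ℕ :=
  sInf { m | ∃ P : SimpleGraph (Fin n), P ≤ GAB G ∧ IsLinearForest P ∧
    m = ∑ v : Fin n, (if v ∈ aSet G ∧ v ∈ c.supp then 2 - P.degree v else 0) }

/-- `n_i(T)`: the number of vertices of `A(T) = A(G) ∩ V(T)` having degree `i` in `G`. -/
noncomputable def degCountComp {n : ℕ} (G : SimpleGraph (Fin n))
    (c : (GAB G).ConnectedComponent) (i : ℕ) : ℕ :=
  (Finset.univ.filter fun v : Fin n => v ∈ c.supp ∧ v ∈ aSet G ∧ G.degree v = i).card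

/-- `s₃'(T)`: the number of 3-prespiders of `G` spanned by `T`, i.e. triples of vertices
of `T` of degree at most 2 in `G` having a common neighbour in `T`. -/
noncomputable def preSpiderCountComp {n : ℕ} (G : SimpleGraph (Fin n))
    (c : (GAB G).ConnectedComponent) : ℕ :=
  (Finset.univ.filter fun q : Fin n × Finset (Fin n) =>
    q.1 ∈ c.supp ∧ q.2.card = 3 ∧
      ∀ a ∈ q.2, a ∈ c.supp ∧ G.degree a ≤ 2 ∧ G.Adj q.1 a).card

/-! ### Acyclicity and covers with prescribed degrees -/

lemma eq_of_common_neighbors {V : Type*} {H : SimpleGraph V} (hH : H.IsAcyclic) {x y a b : V}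
    (hxy : x ≠ y) (hxa : H.Adj x a) (hya : H.Adj y a) (hxb : H.Adj x b) (hyb : H.Adj y b) :
    a = b := by
  have pa : (SimpleGraph.Walk.cons hxa (SimpleGraph.Walk.cons hya.symm .nil)).IsPath := by
    simp [SimpleGraph.Walk.cons_isPath_iff, hxa.ne, hya.ne', hxy]
  have pb : (SimpleGraph.Walk.cons hxb (SimpleGraph.Walk.cons hyb.symm .nil)).IsPath := by
    simp [SimpleGraph.Walk.cons_isPath_iff, hxb.ne, hyb.ne', hxy]
  have h := congrArg (fun p : H.Path x y => p.1.support) ((hH.subsingleton_path x y).elim ⟨_, pa⟩ ⟨_, pb⟩)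
  simpa using h

/-- A graph all of whose edges lie in one component `c` of `K` is acyclic if `K` is acyclic
on `c`. -/
lemma isAcyclic_of_le_component {V : Type*} {K P : SimpleGraph V} (c : K.ConnectedComponent)
    (hK : (K.induce c.supp).IsAcyclic) (hP : ∀ u v, P.Adj u v → K.Adj u v ∧ u ∈ c.supp) :
    P.IsAcyclic := by
  have hle : P ≤ K := fun u v h => (hP u v h).1
  intro v w hw
  have hv : v ∈ c.supp := by
    cases w with
    | nil => exact absurd hw SimpleGraph.Walk.not_isCycle_nil
    | cons h _ => exact (hP _ _ h).2
  have hs : ∀ x ∈ (w.mapLe hle).support, x ∈ c.supp := by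
    intro x hx
    have hr : K.Reachable v x := ⟨(w.mapLe hle).takeUntil x hx⟩
    rw [SimpleGraph.ConnectedComponent.mem_supp_iff] at hv ⊢
    rw [← hv]
    exact (SimpleGraph.ConnectedComponent.sound hr).symm
  refine hK ((w.mapLe hle).induce c.supp hs) ?_
  rw [← SimpleGraph.Walk.isCycle_map_iff_of_injective
    (f := (SimpleGraph.Embedding.induce (G := K) c.supp).toHom) Subtype.val_injective]
  rw [SimpleGraph.Walk.map_induce]
  exact hw.mapLe hle

/-- An edge-minimal subgraph meeting degree demands `r ≤ 2` supported on a set `R` of at most three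
vertices has maximum degree 2, unless some vertex is adjacent to all of `R` and `|R| = 3`. -/
lemma exists_min_subgraph {n : ℕ} (H : SimpleGraph (Fin n)) (R : Finset (Fin n)) (hR : R.card ≤ 3)
    (r : Fin n → ℕ) (hr2 : ∀ v, r v ≤ 2) (hr0 : ∀ v, v ∉ R → r v = 0)
    (hrH : ∀ v, r v ≤ H.degree v) :
    ∃ P : SimpleGraph (Fin n), P ≤ H ∧ (∀ v, r v ≤ P.degree v) ∧
      ((∀ v, P.degree v ≤ 2) ∨ ∃ x, R.card = 3 ∧ ∀ a ∈ R, H.Adj x a) := by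
  obtain ⟨P, hPH, hP⟩ := exists_minimal_le_of_wellFoundedLT
    (fun P : SimpleGraph (Fin n) => ∀ v, r v ≤ P.degree v) H hrH
  refine ⟨P, hPH, hP.prop, ?_⟩
  by_cases hd : ∀ v, P.degree v ≤ 2
  · exact Or.inl hd
  right
  push Not at hd
  obtain ⟨x, hx⟩ := hd
  have hsub : P.neighborFinset x ⊆ R := by
    intro y hy
    have hxy : P.Adj x y := by simpa using hy
    by_contra hyR
    obtain ⟨Q, hQ⟩ : ∃ Q : SimpleGraph (Fin n), ∀ u v, Q.Adj u v ↔ P.Adj u v ∧ s(u, v) ≠ s(x, y) :=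
      ⟨P.deleteEdges {s(x, y)}, fun u v => by simp [SimpleGraph.deleteEdges_adj]⟩
    have hQle : Q ≤ P := fun u v h => ((hQ u v).1 h).1
    -- The edge `xy` is superfluous: `x` exceeds its demand and `y` has none.
    have hQr : ∀ v, r v ≤ Q.degree v := by
      intro v
      by_cases hvy : v = y
      · rw [hvy, hr0 y hyR]; exact Nat.zero_le _
      by_cases hvx : v = x
      · subst hvx
        have : P.neighborFinset v ⊆ insert y (Q.neighborFinset v) := by
          intro z hz
          by_cases hzy : z = y <;> simp_all
        have h1 := (Finset.card_le_card this).trans (Finset.card_insert_le _ _)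
        simp only [SimpleGraph.card_neighborFinset_eq_degree] at h1
        have := hr2 v
        omega
      · refine (hP.prop v).trans ?_
        rw [← SimpleGraph.card_neighborFinset_eq_degree, ← SimpleGraph.card_neighborFinset_eq_degree]
        refine Finset.card_le_card fun z hz => ?_
        simp_all
    have := hP.le_of_le hQr hQle hxy
    simp [hQ] at this
  have hc : R.card ≤ (P.neighborFinset x).card := by
    rw [SimpleGraph.card_neighborFinset_eq_degree]; omega
  have heq := Finset.eq_of_subset_of_card_le hsub hc
  refine ⟨x, ?_, fun a ha => hPH ?_⟩
  · rw [← heq] at hR ⊢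
    rw [SimpleGraph.card_neighborFinset_eq_degree] at hR ⊢
    omega
  · rw [← heq] at ha; simpa using ha

/-! ### Vertices of `A(G)` and `B(G)` -/

lemma four_le_degree_of_mem_bSet {n : ℕ} {G : SimpleGraph (Fin n)} {v : Fin n} (hv : v ∈ bSet G) :
    4 ≤ G.degree v := by
  obtain ⟨-, u, ⟨S, hS, huS⟩, hvu⟩ := hv
  refine (hS v (Or.inr ⟨u, huS, hvu⟩)).trans ?_
  rw [← SimpleGraph.card_neighborFinset_eq_degree, ← Set.ncard_coe_finset]
  exact Set.ncard_le_ncard (fun z hz => by simpa using hz.2) (Set.toFinite _)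

lemma GAB_adj {n : ℕ} {G : SimpleGraph (Fin n)} {u v : Fin n} :
    (GAB G).Adj u v ↔ G.Adj u v ∧ u ∉ coreSet G ∧ v ∉ coreSet G := by
  simp only [GAB, SimpleGraph.fromEdgeSet_adj, Set.mem_ofPred_eq, SimpleGraph.mem_edgeSet,
    Sym2.mem_iff, forall_eq_or_imp, forall_eq]
  exact ⟨fun h => h.1, fun h => ⟨h, h.1.ne⟩⟩

lemma GAB_adj_of_mem_aSet {n : ℕ} {G : SimpleGraph (Fin n)} {u v : Fin n} (hu : u ∈ aSet G)
    (h : G.Adj u v) : (GAB G).Adj u v :=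
  GAB_adj.2 ⟨h, hu.1, fun hv => hu.2 ⟨hu.1, v, hv, h⟩⟩

lemma mem_supp_of_adj {V : Type*} {K : SimpleGraph V} {c : K.ConnectedComponent} {u v : V}
    (h : K.Adj u v) (hu : u ∈ c.supp) : v ∈ c.supp := by
  rw [SimpleGraph.ConnectedComponent.mem_supp_iff] at hu ⊢
  rw [← hu]
  exact (SimpleGraph.ConnectedComponent.sound h.reachable).symm

/-- The vertex set `A(T)`. -/
noncomputable def aComponent {n : ℕ} (G : SimpleGraph (Fin n)) (c : (GAB G).ConnectedComponent) :
    Finset (Fin n) :=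
  Finset.univ.filter fun v => v ∈ aSet G ∧ v ∈ c.supp

/-- The tree `T` as a graph on the full vertex set, with the vertices outside `T` isolated. -/
def compGraph {n : ℕ} (G : SimpleGraph (Fin n)) (c : (GAB G).ConnectedComponent) :
    SimpleGraph (Fin n) where
  Adj u v := (GAB G).Adj u v ∧ u ∈ c.supp
  symm := ⟨fun _ _ h => ⟨h.1.symm, mem_supp_of_adj h.1 h.2⟩⟩
  loopless := ⟨fun _ h => h.1.ne rfl⟩

section
variable {n : ℕ} {G : SimpleGraph (Fin n)} {c : (GAB G).ConnectedComponent}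

lemma mem_aComponent {v : Fin n} : v ∈ aComponent G c ↔ v ∈ aSet G ∧ v ∈ c.supp := by
  simp [aComponent]

lemma compGraph_adj_of_mem {a v : Fin n} (ha : a ∈ aComponent G c) :
    (compGraph G c).Adj a v ↔ G.Adj a v := by
  rw [mem_aComponent] at ha
  exact ⟨fun h => (GAB_adj.1 h.1).1, fun h => ⟨GAB_adj_of_mem_aSet ha.1 h, ha.2⟩⟩

lemma compGraph_degree_of_mem {a : Fin n} (ha : a ∈ aComponent G c) :
    (compGraph G c).degree a = G.degree a := by
  rw [← SimpleGraph.card_neighborFinset_eq_degree, ← SimpleGraph.card_neighborFinset_eq_degree]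
  congr 1
  ext z
  simp [compGraph_adj_of_mem ha]

lemma card_aComponent (hA3 : (c.supp ∩ aSet G).ncard ≤ 3) : (aComponent G c).card ≤ 3 := by
  have : ((aComponent G c : Finset (Fin n)) : Set (Fin n)) = c.supp ∩ aSet G := by
    ext v; simp [aComponent, and_comm]
  rwa [← this, Set.ncard_coe_finset] at hA3

lemma mem_aComponent_of_degree_le (hAB : c ∈ abComponents G) {v : Fin n} (hv : v ∈ c.supp)
    (hd : G.degree v ≤ 2) : v ∈ aComponent G c := by
  refine mem_aComponent.2 ⟨⟨hAB v hv, fun hb => ?_⟩, hv⟩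
  have := four_le_degree_of_mem_bSet hb
  omega

lemma sum_ite_eq (f : Fin n → ℕ) :
    (∑ v, if v ∈ aSet G ∧ v ∈ c.supp then f v else 0) = ∑ v ∈ aComponent G c, f v := by
  rw [aComponent, Finset.sum_filter]

lemma sum_two_sub_degree :
    ∑ v ∈ aComponent G c, (2 - G.degree v) = 2 * degCountComp G c 0 + degCountComp G c 1 := by
  have key : ∀ i, degCountComp G c i
      = ∑ v ∈ aComponent G c, if G.degree v = i then 1 else 0 := by
    intro i
    rw [degCountComp, Finset.card_filter, aComponent, Finset.sum_filter]
    refine Finset.sum_congr rfl fun v _ => ?_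
    by_cases h1 : v ∈ aSet G <;> by_cases h2 : v ∈ c.supp <;> simp [h1, h2]
  rw [key, key, Finset.mul_sum, ← Finset.sum_add_distrib]
  refine Finset.sum_congr rfl fun v _ => ?_
  rcases hd : G.degree v with _ | _ | k <;> simp

/-! ### The two inequalities -/

/-- The leaves of a 3-prespider are exactly the vertices of `A(T)`. -/
lemma prespider_leaves (hAB : c ∈ abComponents G) (hA3 : (c.supp ∩ aSet G).ncard ≤ 3)
    {S : Finset (Fin n)} {x : Fin n} (hS : S.card = 3)
    (h : ∀ a ∈ S, a ∈ c.supp ∧ G.degree a ≤ 2 ∧ G.Adj x a) : S = aComponent G c :=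
  Finset.eq_of_subset_of_card_le
    (fun a ha => mem_aComponent_of_degree_le hAB (h a ha).1 (h a ha).2.1)
    (by rw [hS]; exact card_aComponent hA3)

lemma center_unique (htree : (compGraph G c).IsAcyclic) (h3 : (aComponent G c).card = 3)
    {x y : Fin n} (hx : ∀ a ∈ aComponent G c, G.Adj x a) (hy : ∀ a ∈ aComponent G c, G.Adj y a) :
    x = y := by
  obtain ⟨a, ha, b, hb, hab⟩ := Finset.one_lt_card.1 (by omega : 1 < (aComponent G c).card)
  by_contra hxy
  have adj : ∀ z w, w ∈ aComponent G c → G.Adj z w → (compGraph G c).Adj z w :=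
    fun z w hw h => ((compGraph_adj_of_mem hw).2 h.symm).symm
  exact hab (eq_of_common_neighbors htree hxy (adj _ _ ha (hx a ha)) (adj _ _ ha (hy a ha))
    (adj _ _ hb (hx b hb)) (adj _ _ hb (hy b hb)))

lemma preSpiderCountComp_le_one (hAB : c ∈ abComponents G) (htree : (compGraph G c).IsAcyclic)
    (hA3 : (c.supp ∩ aSet G).ncard ≤ 3) : preSpiderCountComp G c ≤ 1 := by
  refine Finset.card_le_one.2 ?_
  rintro ⟨x, S⟩ hx ⟨y, S'⟩ hy
  simp only [Finset.mem_filter, Finset.mem_univ, true_and] at hx hy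
  obtain ⟨-, hx3, hx⟩ := hx
  obtain ⟨-, hy3, hy⟩ := hy
  obtain rfl := prespider_leaves hAB hA3 hx3 hx
  obtain rfl := prespider_leaves hAB hA3 hy3 hy
  rw [center_unique htree hx3 (fun a ha => (hx a ha).2.2) (fun a ha => (hy a ha).2.2)]

lemma lower_bound (hAB : c ∈ abComponents G) (htree : (compGraph G c).IsAcyclic)
    (hA3 : (c.supp ∩ aSet G).ncard ≤ 3) {P : SimpleGraph (Fin n)} (hP : P ≤ GAB G)
    (hPd : ∀ v, P.degree v ≤ 2) :
    2 * degCountComp G c 0 + degCountComp G c 1 + preSpiderCountComp G c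
      ≤ ∑ v ∈ aComponent G c, (2 - P.degree v) := by
  have hPG : P ≤ G := fun u v h => (GAB_adj.1 (hP h)).1
  have hdeg : ∀ v, P.degree v ≤ G.degree v := fun v => SimpleGraph.degree_le_of_le hPG
  have hle : ∀ v ∈ aComponent G c, 2 - G.degree v ≤ 2 - P.degree v := fun v _ => by
    have := hdeg v; omega
  rw [← sum_two_sub_degree]
  rcases Nat.eq_zero_or_pos (preSpiderCountComp G c) with h0 | hpos
  · rw [h0]; exact Finset.sum_le_sum hle
  have h1 := preSpiderCountComp_le_one hAB htree hA3
  obtain ⟨⟨x, S⟩, hx⟩ := Finset.card_pos.1 hpos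
  simp only [Finset.mem_filter, Finset.mem_univ, true_and] at hx
  obtain ⟨-, hx3, hx⟩ := hx
  obtain rfl := prespider_leaves hAB hA3 hx3 hx
  -- The centre has degree at most 2 in `P`, so some leaf `a` loses its edge to the centre.
  obtain ⟨a, ha, hPa⟩ : ∃ a ∈ aComponent G c, ¬ P.Adj x a := by
    by_contra! hcon
    have : aComponent G c ⊆ P.neighborFinset x := fun a ha => by simpa using hcon a ha
    have := Finset.card_le_card this
    rw [SimpleGraph.card_neighborFinset_eq_degree] at this
    have := hPd x
    omega
  have hlt : P.degree a < G.degree a := by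
    rw [← SimpleGraph.card_neighborFinset_eq_degree, ← SimpleGraph.card_neighborFinset_eq_degree]
    refine Finset.card_lt_card ((Finset.ssubset_iff_of_subset fun z hz => ?_).2 ⟨x, ?_, ?_⟩)
    · simp only [SimpleGraph.mem_neighborFinset] at hz ⊢; exact hPG hz
    · simpa using (hx a ha).2.2.symm
    · simpa using fun h => hPa h.symm
  have : ∑ v ∈ aComponent G c, (2 - G.degree v) < ∑ v ∈ aComponent G c, (2 - P.degree v) :=
    Finset.sum_lt_sum hle ⟨a, ha, by have := (hx a ha).2.1; omega⟩
  omega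

lemma upper_bound (htree : (compGraph G c).IsAcyclic)
    (hA3 : (c.supp ∩ aSet G).ncard ≤ 3) :
    ∃ P ≤ compGraph G c, (∀ v, P.degree v ≤ 2) ∧
      ∑ v ∈ aComponent G c, (2 - P.degree v)
        ≤ 2 * degCountComp G c 0 + degCountComp G c 1 + preSpiderCountComp G c := by
  have hR := card_aComponent hA3
  rw [← sum_two_sub_degree]
  obtain ⟨P, hPH, hPr, hP | ⟨x, h3, hx⟩⟩ := exists_min_subgraph (compGraph G c) (aComponent G c) hR
    (fun v => if v ∈ aComponent G c then min 2 (G.degree v) else 0)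
    (fun v => by split_ifs <;> simp) (fun v hv => if_neg hv)
    (fun v => by
      split_ifs with h
      · rw [compGraph_degree_of_mem h]; exact min_le_right _ _
      · exact Nat.zero_le _)
  · refine ⟨P, hPH, hP, le_add_right (Finset.sum_le_sum fun v hv => ?_)⟩
    have := hPr v
    rw [if_pos hv] at this
    omega
  have hxG : ∀ a ∈ aComponent G c, G.Adj x a := fun a ha =>
    ((compGraph_adj_of_mem ha).1 (hx a ha).symm).symm
  -- A vertex `a` of degree at least 3 can spare its edge to `x`; without one, `x` is the centre
  -- of a 3-prespider, and losing one endpoint is allowed.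
  obtain ⟨a, ha, haS⟩ : ∃ a ∈ aComponent G c, 3 ≤ G.degree a ∨ 1 ≤ preSpiderCountComp G c := by
    by_cases hbig : ∃ a ∈ aComponent G c, 3 ≤ G.degree a
    · obtain ⟨a, ha, h⟩ := hbig
      exact ⟨a, ha, Or.inl h⟩
    · push Not at hbig
      obtain ⟨a, ha⟩ := Finset.card_pos.1 (by omega : 0 < (aComponent G c).card)
      refine ⟨a, ha, Or.inr (Finset.card_pos.2 ⟨(x, aComponent G c), ?_⟩)⟩
      simp only [Finset.mem_filter, Finset.mem_univ, true_and]
      refine ⟨(hx a ha).2, h3, fun b hb => ⟨(mem_aComponent.1 hb).2, ?_, hxG b hb⟩⟩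
      have := hbig b hb
      omega
  obtain ⟨H, hH⟩ : ∃ H : SimpleGraph (Fin n),
      ∀ u v, H.Adj u v ↔ (compGraph G c).Adj u v ∧ s(u, v) ≠ s(x, a) :=
    ⟨(compGraph G c).deleteEdges {s(x, a)}, fun u v => by simp [SimpleGraph.deleteEdges_adj]⟩
  have hHle : H ≤ compGraph G c := fun u v h => ((hH u v).1 h).1
  have hxR : x ∉ aComponent G c := fun h => (hxG x h).ne rfl
  have hdega : G.degree a ≤ H.degree a + 1 := by
    rw [← compGraph_degree_of_mem ha, ← SimpleGraph.card_neighborFinset_eq_degree,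
      ← SimpleGraph.card_neighborFinset_eq_degree]
    refine (Finset.card_le_card fun z hz => ?_).trans (Finset.card_insert_le x _)
    by_cases hzx : z = x <;> simp_all
  have hdeg : ∀ v ∈ aComponent G c, v ≠ a → G.degree v ≤ H.degree v := by
    intro v hv hva
    have hvx : v ≠ x := fun h => hxR (h ▸ hv)
    rw [← compGraph_degree_of_mem hv, ← SimpleGraph.card_neighborFinset_eq_degree,
      ← SimpleGraph.card_neighborFinset_eq_degree]
    refine Finset.card_le_card fun z hz => ?_
    simp_all
  obtain ⟨P, hPH, hPr, hP | ⟨y, -, hy⟩⟩ := exists_min_subgraph H (aComponent G c) hR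
    (fun v => if v ∈ aComponent G c then min 2 (H.degree v) else 0)
    (fun v => by split_ifs <;> simp) (fun v hv => if_neg hv)
    (fun v => by
      split_ifs with h
      · exact min_le_right _ _
      · exact Nat.zero_le _)
  · refine ⟨P, hPH.trans hHle, hP, ?_⟩
    rw [← Finset.add_sum_erase _ _ ha, ← Finset.add_sum_erase _ (fun v => 2 - G.degree v) ha]
    have hrest : ∑ v ∈ (aComponent G c).erase a, (2 - P.degree v)
        ≤ ∑ v ∈ (aComponent G c).erase a, (2 - G.degree v) := by
      refine Finset.sum_le_sum fun v hv => ?_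
      have hv' := Finset.mem_erase.1 hv
      have h1 := hPr v
      rw [if_pos hv'.2] at h1
      have := hdeg v hv'.2 hv'.1
      omega
    have h1 := hPr a
    rw [if_pos ha] at h1
    omega
  ·
    -- `y` is adjacent to all of `A(T)` in `H`, hence equals `x`, but `xa` was removed.
    have hyG : ∀ b ∈ aComponent G c, G.Adj y b := fun b hb =>
      ((compGraph_adj_of_mem hb).1 (hHle (hy b hb)).symm).symm
    have hxy := center_unique htree h3 hxG hyG
    have := hy a ha
    simp [hH, hxy] at this

end

/-- Lemma on `a(T)` for tree components with at most 3 vertices in `A`. -/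
theorem statement_18 {n : ℕ} (G : SimpleGraph (Fin n))
    (c : (GAB G).ConnectedComponent) (hAB : c ∈ abComponents G)
    (htree : ((GAB G).induce c.supp).IsAcyclic)
    (hA3 : (c.supp ∩ aSet G).ncard ≤ 3) :
    aComp G c = 2 * degCountComp G c 0 + degCountComp G c 1 + preSpiderCountComp G c := by

  have hacyc : ∀ P ≤ compGraph G c, P.IsAcyclic := fun P hP =>
    isAcyclic_of_le_component c htree fun _ _ h => hP h
  refine le_antisymm ?_ (le_csInf ?_ ?_)
  · obtain ⟨P, hP, hd, hsum⟩ := upper_bound (hacyc _ le_rfl) hA3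
    refine le_trans (Nat.sInf_le ⟨P, fun _ _ h => (hP h).1, ⟨hacyc P hP, hd⟩, rfl⟩) ?_
    rwa [sum_ite_eq]
  · exact ⟨_, ⊥, bot_le, ⟨hacyc ⊥ bot_le, fun v => by simp⟩, rfl⟩
  · rintro m ⟨P, hP, ⟨-, hd⟩, rfl⟩
    rw [sum_ite_eq]
    exact lower_bound hAB (hacyc _ le_rfl) hA3 hP hd

end PaperMu
end
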